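/- For every integer s ≥ 1, consider the degree n = 2(2^s − 1) + 2^s = 3·2^s − 2 and the Kameko surjection Sq^0 : Q_{3·2^s − 2} → Q_{3·2^{s−1} − 3}. Then the subspace of GL_4(F_2)-invariant elements of the kernel of this map is trivial. -/

import Mathlib

/-!
Common setup: the polynomial algebra `P_4 = F_2[x_1,x_2,x_3,x_4]` (variables `X 0, ..., X 3`),
the Steenrod action, hit polynomials, the cohit spaces `Q_n`, and the (induced) actions of
`GL_4(F_2)` and of the symmetric group `Σ_4` on `Q_n`.
-/

open MvPolynomial

noncomputable section

abbrev kk : Type := ZMod 2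
abbrev P4 : Type := MvPolynomial (Fin 4) kk

/-- The total Steenrod square: the algebra endomorphism of `P4` with `X i ↦ X i + (X i)^2`.
For `g` homogeneous of degree `d`, `Sq^t g` is the degree-`d+t` homogeneous component
of `sqTotal g`. -/
def sqTotal : P4 →ₐ[kk] P4 := aeval fun i => X i + X i ^ 2

/-- The homogeneous polynomials of degree `n`, i.e. `(P_4)_n`, as a submodule. -/
def homog (n : ℕ) : Submodule kk P4 := homogeneousSubmodule (Fin 4) kk n

/-- The subspace `H_n` of hit polynomials of degree `n`: it is spanned by the elements
`Sq^{n-d}(g) = (sqTotal g)_n` for `g` homogeneous of degree `d < n`, i.e. by all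
`∑_{t>0} Sq^t(f_t)` with `f_t ∈ (P_4)_{n-t}`. -/
def hitSub (n : ℕ) : Submodule kk P4 :=
  Submodule.span kk
    {p | ∃ d, d < n ∧ ∃ g ∈ homog d, p = homogeneousComponent n (sqTotal g)}

/-- The cohit space `Q_n = (P_4)_n / H_n`. -/
abbrev Qn (n : ℕ) :=
  ↥(homog n) ⧸ ((hitSub n).comap (homog n).subtype)

/-- Projection of a polynomial onto its degree-`n` part, landing in `homog n`. -/
def toHomog (n : ℕ) : P4 →ₗ[kk] homog n :=
  (homogeneousComponent n).codRestrict (homog n) fun f => homogeneousComponent_mem n f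

/-- The class in `Q_n` of (the degree-`n` component of) a polynomial.  For `f`
homogeneous of degree `n` this is the class `[f]` of `f`. -/
def Qmk (n : ℕ) : P4 →ₗ[kk] Qn n :=
  ((hitSub n).comap (homog n).subtype).mkQ.comp (toHomog n)

/-- Substitution action of a matrix `M`: the algebra endomorphism `X i ↦ ∑ j M i j • X j`. -/
def substM (M : Matrix (Fin 4) (Fin 4) kk) : P4 →ₐ[kk] P4 :=
  aeval fun i => ∑ j, M i j • X j

/-- The set of invertible `4 × 4` matrices over `F_2`, i.e. `GL_4(F_2)`. -/
def glSet : Set (Matrix (Fin 4) (Fin 4) kk) := {M | IsUnit M}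

/-- The set of permutation matrices, i.e. `Σ_4 ⊆ GL_4(F_2)`. -/
def permSet : Set (Matrix (Fin 4) (Fin 4) kk) :=
  {M | ∃ σ : Equiv.Perm (Fin 4), M = σ.toPEquiv.toMatrix}

/-- Homogeneous polynomials of degree `n` whose class in `Q_n` is invariant under every
element of `G` (the action on classes being induced by `substM`): for every `M ∈ G`,
`M·f - f` is hit. -/
def invPre (n : ℕ) (G : Set (Matrix (Fin 4) (Fin 4) kk)) : Submodule kk P4 :=
  homog n ⊓ ⨅ M ∈ G, (hitSub n).comap ((substM M).toLinearMap - LinearMap.id)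

/-- The subspace `(Q_n)^G` of `G`-invariant classes in `Q_n`. -/
def QInv (n : ℕ) (G : Set (Matrix (Fin 4) (Fin 4) kk)) : Submodule kk (Qn n) :=
  (invPre n G).map (Qmk n)

/-- The `Σ_4`-submodule of `Q_n` generated by the classes of the polynomials in `S`:
the span of the classes of all the permuted polynomials `σ · f`, `σ ∈ Σ_4`, `f ∈ S`. -/
def permSpan (n : ℕ) (S : Set P4) : Submodule kk (Qn n) :=
  Submodule.span kk
    {c | ∃ σ : Equiv.Perm (Fin 4), ∃ f ∈ S, c = Qmk n (rename (⇑σ) f)}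

/-- Halve an exponent vector with all entries odd: `a ↦ (a-1)/2` entrywise. -/
def halfExp (d : Fin 4 →₀ ℕ) : Fin 4 →₀ ℕ :=
  d.mapRange (fun a => (a - 1) / 2) (by decide)

open scoped Classical in
/-- The down Kameko map `(P_4)_{2m+4} → (P_4)_m`: the linear map sending a monomial
`f` to `g` if `f = x₁x₂x₃x₄ · g²` (i.e. all exponents of `f` are odd) and to `0` otherwise. -/
def kameko : P4 →ₗ[kk] P4 :=
  (basisMonomials (Fin 4) kk).constr kk fun d =>
    if ∀ i, d i % 2 = 1 then monomial (halfExp d) 1 else 0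

/-- The kernel of the Kameko squaring operation `Sq^0 : Q_{2m+4} → Q_m` induced by
`kameko`: the image in `Q_{2m+4}` of the homogeneous polynomials of degree `2m+4`
whose Kameko image has zero class in `Q_m`. -/
def kamekoKer (m : ℕ) : Submodule kk (Qn (2 * m + 4)) :=
  (homog (2 * m + 4) ⊓ (LinearMap.ker (Qmk m)).comap kameko).map (Qmk (2 * m + 4))

/-!
The cohits carry the operators `[f] ↦ [x_i x_j f²]`. Hitting suitable products with `Sq¹` and `Sq²`
yields Plücker-type relations between them and shows that they commute, and the kernel of the
Kameko map in degree `3·2^s - 2` turns out to be spanned by the words obtained by applying `s` of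
these operators to the class of a variable `x_k`. Viewing the operators as edges of the complete
graph on the variables, a word depends only on its length, on the set of its edges and on the
marked vertex `k`, and the relations reduce all words to a list of marked graphs that does not
depend on `s`.

These normal forms are separated by functionals `ψ(A)`, for `A` a `4 × 2` matrix: substitute the
rows of `A`, seen as linear forms in two variables, and read off the coefficient of the spike with
exponents `(2^(s+1) - 1, 2^s - 1)`. On a word this is the product of the `2 × 2` minors of `A` on
the edges, times the entry of the first column of `A` at `k`.

Let now the class be invariant. If all minors of `A` vanish, then `ψ(A)` kills all words. Otherwise
`A` has rank two, so that every `A·g` with `g` in `GL₂(𝔽₂)` is also of the form `M·A` with `M` in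
`GL₄(𝔽₂)`, and `ψ(A·g)` takes the same value on the class as `ψ(A)`. But minors are unchanged by
`g`, and the three nonzero vectors in the column space of `A` add up to zero, so three of these
equal values add up to zero. Hence all functionals vanish on the class.
-/

/-! ### Steenrod squares and hit polynomials -/

section Steenrod

variable {σ τ : Type*}

/-- The total Steenrod square with a formal parameter `T`: the algebra map with
`x_i ↦ x_i + x_i² T`, so that `f ↦ ∑ t, Sq^t(f) T^t`. -/
def steenrod : MvPolynomial σ kk →ₐ[kk] Polynomial (MvPolynomial σ kk) :=
  aeval fun i => Polynomial.C (X i) + Polynomial.X * Polynomial.C (X i ^ 2)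

/-- The Steenrod square `Sq^t`, on polynomials that need not be homogeneous. -/
def steenrodSq (t : ℕ) : MvPolynomial σ kk →ₗ[kk] MvPolynomial σ kk :=
  (Polynomial.lcoeff (MvPolynomial σ kk) t).restrictScalars kk ∘ₗ steenrod.toLinearMap

theorem coeff_steenrod (t : ℕ) (f : MvPolynomial σ kk) :
    (steenrod f).coeff t = steenrodSq t f := rfl

theorem steenrod_X (i : σ) :
    steenrod (X i : MvPolynomial σ kk) =
      Polynomial.C (X i) + Polynomial.X * Polynomial.C (X i ^ 2) := by
  simp only [steenrod, aeval_X]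

theorem steenrod_C (a : kk) : steenrod (C a : MvPolynomial σ kk) = Polynomial.C (C a) := by
  simp only [steenrod, algHom_C]
  rfl

theorem steenrodSq_zero_apply (f : MvPolynomial σ kk) : steenrodSq 0 f = f := by
  rw [← coeff_steenrod]
  induction f using MvPolynomial.induction_on with
  | C a => rw [steenrod_C, Polynomial.coeff_C_zero]
  | add p q hp hq => rw [map_add, Polynomial.coeff_add, hp, hq]
  | mul_X p i hp => simp [hp, steenrod_X, Polynomial.mul_coeff_zero]

theorem steenrodSq_succ_X_mul (t : ℕ) (i : σ) (f : MvPolynomial σ kk) :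
    steenrodSq (t + 1) (X i * f) = X i * steenrodSq (t + 1) f + X i ^ 2 * steenrodSq t f := by
  simp only [← coeff_steenrod, map_mul, steenrod_X, add_mul, mul_assoc, Polynomial.coeff_add,
    Polynomial.coeff_C_mul, Polynomial.coeff_X_mul]

theorem steenrod_sq (f : MvPolynomial σ kk) :
    steenrod (f ^ 2) = (Polynomial.expand _ 2 (steenrod f)).map (frobenius _ 2) := by
  rw [map_pow, Polynomial.map_frobenius_expand]

theorem steenrodSq_two_mul_sq (t : ℕ) (f : MvPolynomial σ kk) :
    steenrodSq (2 * t) (f ^ 2) = steenrodSq t f ^ 2 := by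
  rw [← coeff_steenrod, steenrod_sq, Polynomial.coeff_map,
    Polynomial.coeff_expand_mul' two_pos, coeff_steenrod, frobenius_def]

theorem steenrodSq_two_mul_add_one_sq (t : ℕ) (f : MvPolynomial σ kk) :
    steenrodSq (2 * t + 1) (f ^ 2) = 0 := by
  rw [← coeff_steenrod, steenrod_sq, Polynomial.coeff_map, Polynomial.coeff_expand two_pos,
    if_neg (by omega), map_zero]

theorem eval_one_steenrod (f : P4) : (steenrod f).eval 1 = sqTotal f := by
  induction f using MvPolynomial.induction_on with
  | C a => rw [steenrod_C, Polynomial.eval_C, sqTotal, algHom_C]; rfl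
  | add p q hp hq => rw [map_add, Polynomial.eval_add, hp, hq, map_add]
  | mul_X p i hp => simp [hp, steenrod_X, sqTotal]

theorem isHomogeneous_steenrodSq_mul {f g : MvPolynomial σ kk} {d e : ℕ}
    (hf : ∀ t, (steenrodSq t f).IsHomogeneous (d + t))
    (hg : ∀ t, (steenrodSq t g).IsHomogeneous (e + t)) (t : ℕ) :
    (steenrodSq t (f * g)).IsHomogeneous (d + e + t) := by
  rw [← coeff_steenrod, map_mul, Polynomial.coeff_mul]
  refine IsHomogeneous.sum _ _ _ fun p hp => ?_
  have degree_eq : d + e + t = d + p.1 + (e + p.2) := by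
    rw [← Finset.HasAntidiagonal.mem_antidiagonal.1 hp]
    ring
  rw [degree_eq]
  exact (hf p.1).mul (hg p.2)

theorem isHomogeneous_steenrodSq_C (a : kk) (t : ℕ) :
    (steenrodSq t (C a : MvPolynomial σ kk)).IsHomogeneous (0 + t) := by
  rw [← coeff_steenrod, steenrod_C, Polynomial.coeff_C]
  split_ifs with h
  · subst h
    exact isHomogeneous_C σ a
  · exact isHomogeneous_zero σ kk _

theorem isHomogeneous_steenrodSq_X (i : σ) (t : ℕ) :
    (steenrodSq t (X i : MvPolynomial σ kk)).IsHomogeneous (1 + t) := by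
  rw [← coeff_steenrod, steenrod_X, mul_comm, Polynomial.coeff_add, Polynomial.coeff_C,
    Polynomial.coeff_C_mul, Polynomial.coeff_X]
  split_ifs with h₀ h₁ h₁
  · omega
  · simpa [h₀] using isHomogeneous_X kk i
  · simpa [← h₁] using (isHomogeneous_X kk i).pow 2
  · simpa using isHomogeneous_zero σ kk _

theorem isHomogeneous_steenrodSq_monomial (u : σ →₀ ℕ) (a : kk) (t : ℕ) :
    (steenrodSq t (monomial u a)).IsHomogeneous (u.degree + t) := by
  induction u using Finsupp.induction_linear generalizing a t with
  | zero => simpa using isHomogeneous_steenrodSq_C a t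
  | add u v hu hv =>
    rw [map_add, ← mul_one a, ← monomial_mul]
    exact isHomogeneous_steenrodSq_mul (hu a) (hv 1) t
  | single i n =>
    rw [Finsupp.degree_single]
    induction n generalizing a t with
    | zero => simpa using isHomogeneous_steenrodSq_C a t
    | succ n ih =>
      rw [Finsupp.single_add, ← mul_one a, ← monomial_mul]
      exact isHomogeneous_steenrodSq_mul (ih a) (isHomogeneous_steenrodSq_X i) t

theorem isHomogeneous_steenrodSq {f : MvPolynomial σ kk} {d : ℕ} (hf : f.IsHomogeneous d) (t : ℕ) :
    (steenrodSq t f).IsHomogeneous (d + t) := by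
  rw [f.as_sum, map_sum]
  refine IsHomogeneous.sum _ _ _ fun u hu => ?_
  have hu' : u.degree = d := by_contra fun h => mem_support_iff.1 hu (hf.coeff_eq_zero h)
  exact hu' ▸ isHomogeneous_steenrodSq_monomial u _ t

theorem homogeneousComponent_of_isHomogeneous {f : MvPolynomial σ kk} {d : ℕ}
    (hf : f.IsHomogeneous d) (n : ℕ) :
    homogeneousComponent n f = if n = d then f else 0 :=
  homogeneousComponent_of_mem ((mem_homogeneousSubmodule _ _).2 hf)

theorem homogeneousComponent_sqTotal {f : P4} {d : ℕ} (hf : f.IsHomogeneous d) (t : ℕ) :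
    homogeneousComponent (d + t) (sqTotal f) = steenrodSq t f := by
  rw [← eval_one_steenrod, Polynomial.eval_eq_sum_range, map_sum]
  simp only [one_pow, mul_one, coeff_steenrod,
    homogeneousComponent_of_isHomogeneous (isHomogeneous_steenrodSq hf _), add_right_inj,
    Finset.sum_ite_eq, Finset.mem_range]
  split_ifs with h
  · rfl
  · exact (Polynomial.coeff_eq_zero_of_natDegree_lt (not_lt.1 fun h' => h (by omega))).symm

/-- The linear substitution `x_i ↦ ∑ j, A i j • x_j`, possibly into other variables. -/
def linSubst [Fintype τ] (A : Matrix σ τ kk) : MvPolynomial σ kk →ₐ[kk] MvPolynomial τ kk :=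
  aeval fun i => ∑ j, A i j • X j

theorem linSubst_X [Fintype τ] (A : Matrix σ τ kk) (i : σ) :
    linSubst A (X i) = ∑ j, A i j • X j := aeval_X _ i

theorem linSubst_linSubst {ρ : Type*} [Fintype τ] [Fintype ρ] (A : Matrix σ τ kk)
    (B : Matrix τ ρ kk) (f : MvPolynomial σ kk) :
    linSubst B (linSubst A f) = linSubst (A * B) f := by
  suffices (linSubst B).comp (linSubst A) = linSubst (A * B) from DFunLike.congr_fun this f
  ext1 i
  simp only [AlgHom.comp_apply, linSubst_X, map_sum, map_smul, Finset.smul_sum, smul_smul,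
    Matrix.mul_apply, Finset.sum_smul]
  exact Finset.sum_comm

theorem steenrod_linSubst [Fintype τ] (A : Matrix σ τ kk) (f : MvPolynomial σ kk) :
    steenrod (linSubst A f) = Polynomial.map (linSubst A : _ →+* _) (steenrod f) := by
  suffices steenrod.comp (linSubst A) = (Polynomial.mapAlgHom (linSubst A)).comp steenrod from
    DFunLike.congr_fun this f
  ext1 i
  simp only [AlgHom.comp_apply, linSubst_X, map_sum, map_smul, steenrod_X, map_add, map_mul,
    Polynomial.coe_mapAlgHom, Polynomial.map_C, Polynomial.map_X, RingHom.coe_coe, map_pow,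
    CharTwo.sum_sq, Finset.mul_sum, ← Finset.sum_add_distrib, smul_add, ← Polynomial.smul_C,
    smul_pow, ZMod.pow_card, mul_smul_comm]

theorem steenrodSq_linSubst [Fintype τ] (A : Matrix σ τ kk) (t : ℕ) (f : MvPolynomial σ kk) :
    steenrodSq t (linSubst A f) = linSubst A (steenrodSq t f) := by
  rw [← coeff_steenrod, steenrod_linSubst, Polynomial.coeff_map, coeff_steenrod]
  rfl

end Steenrod

section Hit

variable {σ : Type*}

/-- The span of all `Sq^t(g)` with `t > 0`: the hit polynomials of all degrees at once. -/
def hit : Submodule kk (MvPolynomial σ kk) :=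
  Submodule.span kk {p | ∃ t g, p = steenrodSq (t + 1) g}

theorem steenrodSq_succ_mem_hit (t : ℕ) (g : MvPolynomial σ kk) : steenrodSq (t + 1) g ∈ hit :=
  Submodule.subset_span ⟨t, g, rfl⟩

theorem hitSub_le_hit (n : ℕ) : hitSub n ≤ hit := by
  refine Submodule.span_le.2 ?_
  rintro _ ⟨d, hd, g, hg, rfl⟩
  obtain ⟨t, rfl⟩ := Nat.exists_eq_add_of_lt hd
  rw [add_assoc, homogeneousComponent_sqTotal hg]
  exact steenrodSq_succ_mem_hit t g

theorem hit_le_comap_hitSub (n : ℕ) : hit ≤ (hitSub n).comap (homogeneousComponent n) := by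
  refine Submodule.span_le.2 ?_
  rintro _ ⟨t, g, rfl⟩
  rw [SetLike.mem_coe, Submodule.mem_comap, ← sum_homogeneousComponent g, map_sum, map_sum]
  refine Submodule.sum_mem _ fun d _ => ?_
  have hd := homogeneousComponent_isHomogeneous d g
  rw [homogeneousComponent_of_isHomogeneous (isHomogeneous_steenrodSq hd _)]
  split_ifs with hn
  · refine Submodule.subset_span ⟨d, by omega, _, hd, ?_⟩
    rw [hn, homogeneousComponent_sqTotal hd]
  · exact Submodule.zero_mem _

theorem mem_hitSub_of_mem_hit {f : P4} {n : ℕ} (hf : f ∈ hit) (hn : f ∈ homog n) :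
    f ∈ hitSub n := by
  have := hit_le_comap_hitSub n hf
  rwa [Submodule.mem_comap, homogeneousComponent_of_isHomogeneous hn, if_pos rfl] at this

theorem Qmk_eq_zero_iff {f : P4} {n : ℕ} (hn : f ∈ homog n) : Qmk n f = 0 ↔ f ∈ hitSub n := by
  rw [Qmk, LinearMap.comp_apply, Submodule.mkQ_apply, Submodule.Quotient.mk_eq_zero,
    Submodule.mem_comap]
  change homogeneousComponent n f ∈ hitSub n ↔ f ∈ hitSub n
  rw [homogeneousComponent_of_isHomogeneous hn, if_pos rfl]

theorem steenrodSq_one_sq (g : MvPolynomial σ kk) : steenrodSq 1 (g ^ 2) = 0 :=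
  steenrodSq_two_mul_add_one_sq 0 g

theorem X_mul_sq_mem_hit (i : σ) (g : MvPolynomial σ kk) : (X i * g) ^ 2 ∈ hit := by
  have h := steenrodSq_succ_mem_hit 0 (X i * g ^ 2)
  rwa [steenrodSq_succ_X_mul, zero_add, steenrodSq_one_sq, mul_zero, zero_add,
    steenrodSq_zero_apply, ← mul_pow] at h

theorem X_mul_X_mul_sq_mem_hit (i j : σ) {f : MvPolynomial σ kk} (hf : f ∈ hit) :
    X i * X j * f ^ 2 ∈ hit := by
  induction hf using Submodule.span_induction with
  | mem _ hp =>
    obtain ⟨t, g, rfl⟩ := hp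
    have cartan : steenrodSq (2 * t + 1 + 1) (X i * (X j * g ^ 2)) =
        X i * X j * steenrodSq (t + 1) g ^ 2 + (X i * (X j * steenrodSq t g)) ^ 2 := by
      have even₂ : steenrodSq (2 * t + 1 + 1) (g ^ 2) = steenrodSq (t + 1) g ^ 2 :=
        steenrodSq_two_mul_sq (t + 1) g
      simp only [steenrodSq_succ_X_mul, steenrodSq_two_mul_add_one_sq, steenrodSq_two_mul_sq, even₂]
      ring
    rw [← Submodule.add_mem_iff_left _ (X_mul_sq_mem_hit i _), ← cartan]
    exact steenrodSq_succ_mem_hit _ _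
  | zero => simp
  | add f g _ _ hf hg =>
    rw [CharTwo.add_sq, mul_add]
    exact Submodule.add_mem _ hf hg
  | smul a f _ hf =>
    rw [smul_pow, mul_smul_comm]
    exact Submodule.smul_mem _ _ hf

theorem steenrodSq_X_mul_X_mul_X_mul_X_mul_sq (i j k l : σ) (t : ℕ) (h : MvPolynomial σ kk) :
    ∃ g, steenrodSq (2 * t + 1 + 1) (X i * (X j * (X k * (X l * h ^ 2)))) =
      X i * X j * X k * X l * steenrodSq (t + 1) h ^ 2
        + X k * X l * (X i * X j * steenrodSq t h) ^ 2
        + X j * X l * (X i * X k * steenrodSq t h) ^ 2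
        + X j * X k * (X i * X l * steenrodSq t h) ^ 2
        + X i * X l * (X j * X k * steenrodSq t h) ^ 2
        + X i * X k * (X j * X l * steenrodSq t h) ^ 2
        + X i * X j * (X k * X l * steenrodSq t h) ^ 2 + (X i * g) ^ 2 := by
  cases t with
  | zero =>
    refine ⟨0, ?_⟩
    simp only [mul_zero, zero_add, steenrodSq_succ_X_mul, steenrodSq_one_sq, steenrodSq_zero_apply,
      ← steenrodSq_two_mul_sq 1, mul_one]
    ring
  | succ t =>
    refine ⟨X j * X k * X l * steenrodSq t h, ?_⟩
    have odd₁ : steenrodSq (2 * t + 1) (h ^ 2) = 0 := steenrodSq_two_mul_add_one_sq t h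
    have odd₃ : steenrodSq (2 * t + 1 + 1 + 1) (h ^ 2) = 0 :=
      steenrodSq_two_mul_add_one_sq (t + 1) h
    have even₂ : steenrodSq (2 * t + 1 + 1) (h ^ 2) = steenrodSq (t + 1) h ^ 2 :=
      steenrodSq_two_mul_sq (t + 1) h
    have even₄ : steenrodSq (2 * t + 1 + 1 + 1 + 1) (h ^ 2) = steenrodSq (t + 1 + 1) h ^ 2 :=
      steenrodSq_two_mul_sq (t + 1 + 1) h
    rw [show 2 * (t + 1) = 2 * t + 1 + 1 by ring]
    simp only [steenrodSq_succ_X_mul, steenrodSq_two_mul_sq, odd₁, even₂, odd₃, even₄]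
    ring

end Hit

/-! ### Operators on cohits -/

section Operators

variable {σ : Type*}

/-- The cohit space `P / H` in all degrees at once. -/
abbrev Cohits (σ : Type*) : Type _ := MvPolynomial σ kk ⧸ (hit : Submodule kk (MvPolynomial σ kk))

/-- The class of a polynomial modulo hit polynomials. -/
def cls : MvPolynomial σ kk →ₗ[kk] Cohits σ := hit.mkQ

theorem cls_eq_zero_iff {f : MvPolynomial σ kk} : cls f = 0 ↔ f ∈ hit :=
  Submodule.Quotient.mk_eq_zero _

theorem cls_surjective : Function.Surjective (cls : MvPolynomial σ kk → Cohits σ) :=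
  Submodule.mkQ_surjective _

/-- The map `f ↦ a f²`, which is linear over `𝔽₂`. -/
def mulSq (a : MvPolynomial σ kk) : MvPolynomial σ kk →ₗ[kk] MvPolynomial σ kk where
  toFun f := a * f ^ 2
  map_add' f g := by rw [CharTwo.add_sq, mul_add]
  map_smul' c f := by rw [smul_pow, ZMod.pow_card, mul_smul_comm, RingHom.id_apply]

/-- The operator `[f] ↦ [x_i x_j f²]` on cohits. -/
def op (i j : σ) : Module.End kk (Cohits σ) :=
  hit.mapQ hit (mulSq (X i * X j)) fun _ => X_mul_X_mul_sq_mem_hit i j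

theorem op_cls (i j : σ) (f : MvPolynomial σ kk) : op i j (cls f) = cls (X i * X j * f ^ 2) := rfl

theorem op_comm (i j : σ) : op i j = op j i := by
  simp only [op, mul_comm]

theorem op_self (i : σ) : op i i = 0 := by
  refine LinearMap.ext fun y => ?_
  obtain ⟨f, rfl⟩ := cls_surjective y
  rw [op_cls, ← sq, ← mul_pow, LinearMap.zero_apply, cls_eq_zero_iff]
  exact X_mul_sq_mem_hit i f

theorem cls_steenrodSq_succ (t : ℕ) (f : MvPolynomial σ kk) : cls (steenrodSq (t + 1) f) = 0 :=
  cls_eq_zero_iff.2 (steenrodSq_succ_mem_hit t f)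

/-- `Sq¹(x_i x_j x_k g²)` is hit. -/
theorem op_cls_X_mul (i j k : σ) (g : MvPolynomial σ kk) :
    op i j (cls (X k * g)) = op j k (cls (X i * g)) + op i k (cls (X j * g)) := by
  have h := cls_steenrodSq_succ 0 (X i * (X j * (X k * g ^ 2)))
  simp only [zero_add, steenrodSq_succ_X_mul, steenrodSq_one_sq, steenrodSq_zero_apply] at h
  rw [← sub_eq_zero, ZModModule.sub_eq_add, ← h]
  simp only [op_cls, ← map_add]
  congr 1
  ring

theorem op_pow_cls_X_mul (i j k : σ) (r : ℕ) (g : MvPolynomial σ kk) :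
    (op i j ^ (r + 1)) (cls (X k * g)) =
      (op j k ^ (r + 1)) (cls (X i * g)) + (op i k ^ (r + 1)) (cls (X j * g)) := by
  induction r generalizing g with
  | zero => simpa only [zero_add, pow_one] using op_cls_X_mul i j k g
  | succ r ih =>
    have h := ih (X i * X j * X k * g ^ 2)
    rw [show X k * (X i * X j * X k * g ^ 2) = X i * X j * (X k * g) ^ 2 by ring,
      show X i * (X i * X j * X k * g ^ 2) = X j * X k * (X i * g) ^ 2 by ring,
      show X j * (X i * X j * X k * g ^ 2) = X i * X k * (X j * g) ^ 2 by ring,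
      ← op_cls, ← op_cls, ← op_cls] at h
    simpa only [pow_succ _ (r + 1), Module.End.mul_apply] using h

/-- The class of a variable. -/
def xcls (k : σ) : Cohits σ := cls (X k)

theorem op_pow_xcls (i j k : σ) (r : ℕ) :
    (op i j ^ (r + 1)) (xcls k) = (op j k ^ (r + 1)) (xcls i) + (op i k ^ (r + 1)) (xcls j) := by
  simpa only [mul_one, xcls] using op_pow_cls_X_mul i j k r 1

theorem cls_X_mul_X_mul_sq (k l : σ) (h : MvPolynomial σ kk) :
    cls (X k * (X l * h ^ 2)) = op k l (cls h) := by
  rw [op_cls, mul_assoc]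

/-- For `r = 0` this is the Plücker relation. -/
theorem op_pow_mul_op (i j k l : σ) (r : ℕ) :
    op i j ^ (r + 1) * op k l = op j k ^ (r + 1) * op i l + op i k ^ (r + 1) * op j l := by
  refine LinearMap.ext fun y => ?_
  obtain ⟨f, rfl⟩ := cls_surjective y
  have h := op_pow_cls_X_mul i j k r (X l * f ^ 2)
  rw [cls_X_mul_X_mul_sq, cls_X_mul_X_mul_sq, cls_X_mul_X_mul_sq] at h
  rw [LinearMap.add_apply, Module.End.mul_apply, Module.End.mul_apply, Module.End.mul_apply]
  exact h

theorem op_mul_op_comm (i j k l : σ) : op i j * op k l = op k l * op i j := by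
  have sq_two : op i j * op k l + op i k * op j l + op i l * op j k + op j k * op i l
      + op j l * op i k + op k l * op i j = 0 := by
    refine LinearMap.ext fun y => ?_
    obtain ⟨f, rfl⟩ := cls_surjective y
    obtain ⟨g, hg⟩ := steenrodSq_X_mul_X_mul_X_mul_X_mul_sq i j k l 0 (f ^ 2)
    have h := congrArg cls hg
    rw [cls_steenrodSq_succ, steenrodSq_one_sq, steenrodSq_zero_apply, eq_comm] at h
    simp only [map_add, cls_eq_zero_iff.2 (X_mul_sq_mem_hit i g), ← op_cls, add_zero] at h
    rw [LinearMap.zero_apply, ← h]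
    simp only [LinearMap.add_apply, Module.End.mul_apply, zero_pow two_ne_zero, mul_zero, map_zero,
      zero_add]
    abel
  have plucker₁ := op_pow_mul_op i j k l 0
  have plucker₂ := op_pow_mul_op i j l k 0
  simp only [zero_add, pow_one, op_comm l k] at plucker₁ plucker₂
  linear_combination (norm := match_scalars <;> rfl)
    (1 : kk) • sq_two + (1 : kk) • plucker₁ + (1 : kk) • plucker₂

theorem op_pow_mul_op_swap (i j k : σ) (r : ℕ) :
    op i j ^ (r + 1) * op i k = op i k ^ (r + 1) * op i j := by
  have h := op_pow_mul_op i j k i r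
  rwa [op_self, mul_zero, zero_add, op_comm j i, op_comm k i] at h

theorem cls_X_mul_star (i j k l : σ) (g : MvPolynomial σ kk) :
    op i j (cls (X k * (X i * X j * X l * g ^ 2))) =
      op j k (op j l (cls (X i * g))) + op i k (op i l (cls (X j * g))) := by
  rw [op_cls_X_mul, show X i * (X i * X j * X l * g ^ 2) = X j * X l * (X i * g) ^ 2 by ring,
    show X j * (X i * X j * X l * g ^ 2) = X i * X l * (X j * g) ^ 2 by ring, ← op_cls, ← op_cls]

theorem op_op_xcls (i j k l : σ) :
    op i j (op i j (op k l (xcls i))) = op k l (op k l (op i j (xcls i))) := by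
  have h₁ := congrArg (fun y => (op i j ^ 2) y) (op_pow_xcls k l i 0)
  have h₂ := congrArg (fun y => (op i k ^ 2) y) (op_pow_xcls i j l 0)
  have h₃ := congrArg (fun y => (op i l ^ 2) y) (op_pow_xcls i j k 0)
  have h₄ := LinearMap.congr_fun (op_pow_mul_op i k l j 1) (xcls i)
  have swap₁ := LinearMap.congr_fun (op_pow_mul_op_swap i j l 1) (xcls k)
  have swap₂ := LinearMap.congr_fun (op_pow_mul_op_swap i j k 1) (xcls l)
  have swap₃ := LinearMap.congr_fun (op_pow_mul_op_swap i l k 1) (xcls j)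
  simp only [zero_add, pow_one, map_add, op_comm k i, op_comm l i, op_comm k j, op_comm l j,
    Module.End.mul_apply, LinearMap.add_apply, one_add_one_eq_two] at h₁ h₂ h₃ h₄ swap₁ swap₂ swap₃
  rw [← Module.End.mul_apply, ← Module.End.mul_apply (op k l), ← sq, ← sq]
  linear_combination (norm := match_scalars <;> rfl) (1 : kk) • h₁ + (1 : kk) • h₂ +
    (1 : kk) • h₃ + (1 : kk) • h₄ + (1 : kk) • swap₁ + (1 : kk) • swap₂ + (1 : kk) • swap₃

end Operators

/-! ### Words and graphs -/

section Words

/-- The operator of an edge of the complete graph on the variables; it vanishes for a loop. -/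
def edgeOp {σ : Type*} : Sym2 σ → Module.End kk (Cohits σ) := Sym2.lift ⟨op, op_comm⟩

theorem edgeOp_mk {σ : Type*} (i j : σ) : edgeOp s(i, j) = op i j := rfl

theorem edgeOp_comm {σ : Type*} (a b : Sym2 σ) (y : Cohits σ) :
    edgeOp a (edgeOp b y) = edgeOp b (edgeOp a y) := by
  induction a, b using Sym2.inductionOn₂ with
  | hf i j k l => exact LinearMap.congr_fun (op_mul_op_comm i j k l) y

instance {σ : Type*} :
    LeftCommutative fun (a : Sym2 σ) (y : Cohits σ) => edgeOp a y :=
  ⟨edgeOp_comm⟩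

/-- The class obtained from `[x_k]` by applying the operators of the edges in `m`. -/
def word (m : Multiset (Sym2 (Fin 4))) (k : Fin 4) : Cohits (Fin 4) :=
  m.foldr (fun a y => edgeOp a y) (xcls k)

theorem word_zero (k : Fin 4) : word 0 k = xcls k := rfl

theorem word_cons (a : Sym2 (Fin 4)) (m : Multiset (Sym2 (Fin 4))) (k : Fin 4) :
    word (a ::ₘ m) k = edgeOp a (word m k) :=
  Multiset.foldr_cons _ _ a m

theorem edgeOp_edgeOp_edgeOp_xcls (a b : Sym2 (Fin 4)) (m : Fin 4) :
    edgeOp a (edgeOp a (edgeOp b (xcls m))) = edgeOp a (edgeOp b (edgeOp b (xcls m))) := by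
  induction a, b using Sym2.inductionOn₂ with | hf i j k l
  have covered : ∀ i j k l m : Fin 4, i = j ∨ k = l ∨ i = k ∨ i = l ∨ j = k ∨ j = l ∨
      m = i ∨ m = j ∨ m = k ∨ m = l := by decide
  have shared (i j k : Fin 4) :
      op i j (op i j (op i k (xcls m))) = op i j (op i k (op i k (xcls m))) := by
    refine (LinearMap.congr_fun (op_pow_mul_op_swap i j k 1) (xcls m)).trans ?_
    rw [← edgeOp_mk i j, ← edgeOp_mk i k, edgeOp_comm s(i, j) s(i, k) (edgeOp s(i, k) _),
      edgeOp_comm s(i, j) s(i, k) (xcls m)]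
    rfl
  have endpoint (i j k l : Fin 4) :
      op i j (op i j (op k l (xcls i))) = op i j (op k l (op k l (xcls i))) := by
    rw [op_op_xcls, ← edgeOp_mk i j, ← edgeOp_mk k l, edgeOp_comm s(i, j), edgeOp_comm s(i, j)]
  have endpoint' (i j k l : Fin 4) :
      op k l (op k l (op i j (xcls i))) = op k l (op i j (op i j (xcls i))) := by
    rw [← op_op_xcls, ← edgeOp_mk i j, ← edgeOp_mk k l, edgeOp_comm s(k, l), edgeOp_comm s(k, l)]
  simp only [edgeOp_mk]
  rcases covered i j k l m with rfl | rfl | rfl | rfl | rfl | rfl | rfl | rfl | rfl | rfl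
  · simp only [op_self, LinearMap.zero_apply]
  · simp only [op_self, LinearMap.zero_apply, map_zero]
  · exact shared _ _ _
  · rw [op_comm k]; exact shared _ _ _
  · rw [op_comm i]; exact shared _ _ _
  · rw [op_comm i, op_comm k]; exact shared _ _ _
  · exact endpoint _ _ _ _
  · rw [op_comm i]; exact endpoint _ _ _ _
  · exact endpoint' _ _ _ _
  · rw [op_comm k]; exact endpoint' _ _ _ _

theorem word_cons_eq_word_cons {a b : Sym2 (Fin 4)} {m : Multiset (Sym2 (Fin 4))} (ha : a ∈ m)
    (hb : b ∈ m) (k : Fin 4) : word (a ::ₘ m) k = word (b ::ₘ m) k := by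
  obtain rfl | hab := eq_or_ne a b
  · rfl
  obtain ⟨m, rfl⟩ := Multiset.exists_cons_of_mem hb
  obtain ⟨m, rfl⟩ := Multiset.exists_cons_of_mem ((Multiset.mem_cons.1 ha).resolve_left hab)
  clear ha hb hab
  simp only [word_cons, edgeOp_comm b a]
  induction m using Multiset.induction with
  | empty => exact edgeOp_edgeOp_edgeOp_xcls a b k
  | cons e m ih =>
    simp only [word_cons, edgeOp_comm _ e]
    exact congrArg (edgeOp e) ih

theorem word_add_eq_word_add_replicate {S : Multiset (Sym2 (Fin 4))} {a : Sym2 (Fin 4)}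
    (ha : a ∈ S) (m : Multiset (Sym2 (Fin 4))) (hm : m ⊆ S) (k : Fin 4) :
    word (S + m) k = word (S + Multiset.replicate m.card a) k := by
  induction m using Multiset.induction with
  | empty => rfl
  | cons b m ih =>
    have hb : b ∈ S + m := Multiset.mem_add.2 (.inl (hm (Multiset.mem_cons_self b m)))
    have ha' : a ∈ S + m := Multiset.mem_add.2 (.inl ha)
    rw [Multiset.add_cons, word_cons_eq_word_cons hb ha', Multiset.card_cons,
      Multiset.replicate_succ, Multiset.add_cons, word_cons, word_cons,
      ih fun _ he => hm (Multiset.mem_cons_of_mem he)]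

theorem word_eq_word {m m' : Multiset (Sym2 (Fin 4))} (hcard : m.card = m'.card)
    (hsupp : m.toFinset = m'.toFinset) (k : Fin 4) : word m k = word m' k := by
  obtain rfl | ⟨a, ha⟩ := m.empty_or_exists_mem
  · rw [Multiset.card_eq_zero.1 hcard.symm]
  have canonical (n : Multiset (Sym2 (Fin 4))) (hn : a ∈ n) :
      word n k = word (n.toFinset.val +
        Multiset.replicate (n.card - n.toFinset.card) a) k := by
    conv_lhs => rw [← add_tsub_cancel_of_le n.dedup_le]
    rw [word_add_eq_word_add_replicate (Multiset.mem_dedup.2 hn) _ fun e he =>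
        Multiset.mem_dedup.2 (Multiset.mem_of_le tsub_le_self he),
      Multiset.card_sub n.dedup_le]
    rfl
  have ha' : a ∈ m' := by rwa [← Multiset.mem_toFinset, ← hsupp, Multiset.mem_toFinset]
  rw [canonical m ha, canonical m' ha', hcard, hsupp]

open scoped Classical in
/-- The common value of all words of length `s` whose set of edges is `S`; it is zero if there
is no such word. -/
def graphWord (s : ℕ) (S : Finset (Sym2 (Fin 4))) (k : Fin 4) : Cohits (Fin 4) :=
  if h : ∃ m : Multiset (Sym2 (Fin 4)), m.card = s ∧ m.toFinset = S then word h.choose k else 0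

theorem word_eq_graphWord (m : Multiset (Sym2 (Fin 4))) (k : Fin 4) :
    word m k = graphWord m.card m.toFinset k := by
  have h : ∃ n : Multiset (Sym2 (Fin 4)), n.card = m.card ∧ n.toFinset = m.toFinset :=
    ⟨m, rfl, rfl⟩
  rw [graphWord, dif_pos h]
  exact word_eq_word h.choose_spec.1.symm h.choose_spec.2.symm k

theorem graphWord_eq_zero {s : ℕ} {S : Finset (Sym2 (Fin 4))} (h : s < S.card) (k : Fin 4) :
    graphWord s S k = 0 := by
  refine dif_neg ?_
  rintro ⟨m, rfl, rfl⟩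
  exact (Multiset.toFinset_card_le m).not_gt h

theorem exists_multiset_toFinset_eq {α : Type*} [DecidableEq α] {s : ℕ} {S : Finset α}
    (hS : S.Nonempty) (h : S.card ≤ s) : ∃ m : Multiset α, m.card = s ∧ m.toFinset = S := by
  obtain ⟨a, ha⟩ := hS
  refine ⟨S.val + Multiset.replicate (s - S.card) a, ?_, ?_⟩
  · rw [Multiset.card_add, Multiset.card_replicate, Finset.card_val, Nat.add_sub_cancel' h]
  · ext e
    rw [Multiset.mem_toFinset, Multiset.mem_add, Finset.mem_val]
    exact or_iff_left_of_imp fun he => Multiset.eq_of_mem_replicate he ▸ ha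

theorem edgeOp_graphWord {s : ℕ} {S : Finset (Sym2 (Fin 4))} (hS : S.Nonempty) (h : S.card ≤ s)
    (a : Sym2 (Fin 4)) (k : Fin 4) :
    edgeOp a (graphWord s S k) = graphWord (s + 1) (insert a S) k := by
  obtain ⟨m, rfl, rfl⟩ := exists_multiset_toFinset_eq hS h
  rw [← word_eq_graphWord, ← word_cons, word_eq_graphWord, Multiset.card_cons,
    Multiset.toFinset_cons]

end Words

section GraphRelations

theorem word_replicate (a : Sym2 (Fin 4)) (r : ℕ) (k : Fin 4) :
    word (Multiset.replicate r a) k = (edgeOp a ^ r) (xcls k) := by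
  induction r with
  | zero => rfl
  | succ r ih =>
    rw [Multiset.replicate_succ, word_cons, ih, pow_succ', Module.End.mul_apply]

theorem word_add_replicate (m : Multiset (Sym2 (Fin 4))) (i j k : Fin 4) (r : ℕ) :
    word (m + Multiset.replicate (r + 1) s(i, j)) k =
      word (m + Multiset.replicate (r + 1) s(j, k)) i +
        word (m + Multiset.replicate (r + 1) s(i, k)) j := by
  induction m using Multiset.induction with
  | empty => simpa only [zero_add, word_replicate, edgeOp_mk] using op_pow_xcls i j k r
  | cons a m ih => simp only [Multiset.cons_add, word_cons, ih, map_add]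

theorem word_val_add_replicate (S : Finset (Sym2 (Fin 4))) (a : Sym2 (Fin 4)) (k : Fin 4)
    (r : ℕ) : word (S.val + Multiset.replicate (r + 1) a) k =
      graphWord (S.card + r + 1) (insert a S) k := by
  rw [word_eq_graphWord, Multiset.card_add, Finset.card_val, Multiset.card_replicate, ← add_assoc]
  congr 1
  ext e
  simp only [Multiset.mem_toFinset, Multiset.mem_add, Finset.mem_val, Multiset.mem_replicate,
    Finset.mem_insert, ne_eq, r.succ_ne_zero, not_false_eq_true, true_and, or_comm]

theorem graphWord_insert {s : ℕ} {S : Finset (Sym2 (Fin 4))} (h : S.card < s) (i j k : Fin 4) :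
    graphWord s (insert s(i, j) S) k =
      graphWord s (insert s(j, k) S) i + graphWord s (insert s(i, k) S) j := by
  obtain ⟨r, rfl⟩ := Nat.exists_eq_add_of_lt h
  simpa only [word_val_add_replicate] using word_add_replicate S.val i j k r

theorem graphWord_insert_insert {s : ℕ} {S : Finset (Sym2 (Fin 4))} (hS : S.Nonempty)
    (h : S.card + 2 ≤ s) (i j k l x : Fin 4) :
    graphWord s (insert s(i, j) (insert s(k, l) S)) x =
      graphWord s (insert s(j, k) (insert s(i, l) S)) x +
        graphWord s (insert s(i, k) (insert s(j, l) S)) x := by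
  obtain ⟨s, rfl⟩ := Nat.exists_eq_add_of_le' h
  have expand (a b : Sym2 (Fin 4)) : graphWord (s + (S.card + 2)) (insert a (insert b S)) x =
      edgeOp a (edgeOp b (graphWord (s + S.card) S x)) := by
    rw [edgeOp_graphWord hS (Nat.le_add_left _ _), edgeOp_graphWord (Finset.insert_nonempty b S)]
    · rfl
    · exact (Finset.card_insert_le b S).trans (Nat.succ_le_succ (Nat.le_add_left _ _))
  rw [expand, expand, expand]
  simpa only [zero_add, pow_one, edgeOp_mk, LinearMap.add_apply, Module.End.mul_apply] using
    LinearMap.congr_fun (op_pow_mul_op i j k l 0) (graphWord (s + S.card) S x)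

theorem edgeOp_pow_graphWord {s : ℕ} {S : Finset (Sym2 (Fin 4))} (hS : S.Nonempty)
    (h : S.card ≤ s) (a : Sym2 (Fin 4)) (k : Fin 4) (r : ℕ) :
    (edgeOp a ^ (r + 1)) (graphWord s S k) = graphWord (s + r + 1) (insert a S) k := by
  induction r with
  | zero => rw [zero_add, pow_one, edgeOp_graphWord hS h, add_zero]
  | succ r ih =>
    rw [pow_succ', Module.End.mul_apply, ih, edgeOp_graphWord (Finset.insert_nonempty a S),
      Finset.insert_idem, add_assoc s r 1]
    exact (Finset.card_insert_le a S).trans (by omega)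

theorem graphWord_one (a : Sym2 (Fin 4)) (k : Fin 4) : graphWord 1 {a} k = edgeOp a (xcls k) :=
  (word_eq_graphWord {a} k).symm

theorem graphWord_star (s : ℕ) (i j k l : Fin 4) :
    graphWord (s + 3) {s(i, j), s(j, k), s(j, l)} i
        + graphWord (s + 3) {s(i, j), s(i, k), s(i, l)} j
      = graphWord (s + 3) {s(j, k), s(j, l)} i + graphWord (s + 3) {s(i, k), s(i, l)} j := by
  have cherry (a b : Sym2 (Fin 4)) (x : Fin 4) :
      edgeOp a (edgeOp b (xcls x)) = graphWord 2 {a, b} x := by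
    rw [← graphWord_one,
      edgeOp_graphWord (Finset.singleton_nonempty b) (Finset.card_singleton b).le]
  have h := op_pow_cls_X_mul i j k (s + 1) (X i * X j * X l * 1 ^ 2)
  rw [pow_succ (op i j), Module.End.mul_apply, cls_X_mul_star, map_add,
    show X i * (X i * X j * X l * 1 ^ 2) = X j * X l * (X i * 1 : P4) ^ 2 by ring,
    show X j * (X i * X j * X l * 1 ^ 2) = X i * X l * (X j * 1 : P4) ^ 2 by ring,
    ← op_cls, ← op_cls, mul_one, mul_one, ← xcls, ← xcls] at h
  simp only [← edgeOp_mk] at h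
  rw [cherry, cherry, ← graphWord_one, ← graphWord_one,
    edgeOp_pow_graphWord (Finset.insert_nonempty _ _) Finset.card_le_two,
    edgeOp_pow_graphWord (Finset.insert_nonempty _ _) Finset.card_le_two,
    edgeOp_pow_graphWord (Finset.singleton_nonempty _) (Finset.card_singleton _).le,
    edgeOp_pow_graphWord (Finset.singleton_nonempty _) (Finset.card_singleton _).le] at h
  convert h using 3 <;> ring

end GraphRelations

/-! ### Normal forms of words -/

section NormalForms

/-- A marked graph standing for a word, with the flags `(V, W)` whose sum is the functional
detecting this word. -/
structure DualWord where
  edges : Finset (Sym2 (Fin 4))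
  vertex : Fin 4
  flags : List (Finset (Fin 4) × Finset (Fin 4))

/-- The normal forms using the variables `x_i` and `x_j` only. -/
def edgeWords (i j : Fin 4) : List DualWord :=
  [⟨{s(i, j)}, i, [({i}, {j})]⟩,
   ⟨{s(i, j)}, j, [({j}, {i})]⟩]

/-- The normal forms using precisely the variables `x_i`, `x_j` and `x_k`, for `i < j < k`. -/
def triangleWords (i j k : Fin 4) : List DualWord :=
  [⟨{s(i, j), s(i, k)}, i, [({i}, {j, k})]⟩,
   ⟨{s(i, j), s(j, k)}, j, [({j}, {i, k})]⟩,
   ⟨{s(i, k), s(j, k)}, k, [({k}, {i, j})]⟩,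
   ⟨{s(i, k)}, j, [({i, j}, {k})]⟩,
   ⟨{s(i, j), s(i, k)}, j, [({i, j}, {i, k})]⟩,
   ⟨{s(i, j), s(i, k)}, k, [({i, k}, {j}), ({i, k}, {i, j})]⟩,
   ⟨{s(i, j)}, k, [({j, k}, {i})]⟩,
   ⟨{s(i, j), s(j, k)}, k, [({i, k}, {j})]⟩]

/-- The normal forms using all four variables. -/
def fullWords : List DualWord :=
  [⟨{s(0, 1), s(0, 2), s(0, 3)}, 0, [({0}, {1, 2, 3})]⟩,
   ⟨{s(0, 1), s(1, 2), s(1, 3)}, 1, [({1}, {0, 2, 3})]⟩,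
   ⟨{s(0, 2), s(1, 2), s(2, 3)}, 2, [({2}, {0, 1, 3})]⟩,
   ⟨{s(0, 3), s(1, 3), s(2, 3)}, 3, [({3}, {0, 1, 2})]⟩,
   ⟨{s(0, 1), s(0, 2), s(0, 3)}, 1, [({0, 1}, {2, 3}), ({0, 1}, {0, 2, 3})]⟩,
   ⟨{s(0, 1), s(0, 2), s(0, 3)}, 2, [({0, 2}, {1, 3}), ({0, 2}, {0, 1, 3})]⟩,
   ⟨{s(0, 1), s(0, 2), s(0, 3)}, 3, [({0, 3}, {1, 2}), ({0, 3}, {0, 1, 2})]⟩,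
   ⟨{s(0, 1), s(1, 2), s(1, 3)}, 2, [({1, 2}, {0, 3}), ({1, 2}, {0, 1, 3})]⟩,
   ⟨{s(0, 1), s(1, 2), s(1, 3)}, 3, [({1, 3}, {0, 2}), ({1, 3}, {0, 1, 2})]⟩,
   ⟨{s(0, 2), s(1, 2), s(2, 3)}, 3, [({2, 3}, {0, 1}), ({2, 3}, {0, 1, 2})]⟩,
   ⟨{s(0, 2), s(0, 3)}, 1,
     [({2, 3}, {0, 1}), ({0, 2, 3}, {1}), ({0, 2, 3}, {0, 1}), ({1, 2, 3}, {0})]⟩,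
   ⟨{s(1, 2), s(1, 3)}, 0, [({0, 1}, {2, 3})]⟩,
   ⟨{s(0, 2), s(1, 2)}, 3, [({0, 1, 2}, {3}), ({0, 1, 2}, {0, 1, 3}), ({0, 1, 3}, {2})]⟩,
   ⟨{s(0, 3), s(1, 3)}, 2, [({2, 3}, {0, 1})]⟩,
   ⟨{s(0, 1), s(0, 3)}, 2, [({0, 1, 2}, {0, 3}), ({0, 1, 3}, {0, 2}), ({0, 2, 3}, {1, 2})]⟩,
   ⟨{s(0, 1), s(0, 2)}, 3, [({1, 2, 3}, {0})]⟩,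
   ⟨{s(0, 1), s(0, 2), s(2, 3)}, 3, [({0, 2, 3}, {1, 2}), ({0, 2, 3}, {0, 1, 2})]⟩,
   ⟨{s(1, 3), s(2, 3)}, 0, [({0, 3}, {1, 2})]⟩,
   ⟨{s(0, 3), s(2, 3)}, 1, [({0, 1, 2}, {3})]⟩,
   ⟨{s(0, 2), s(2, 3)}, 1, [({1, 3}, {0, 2}), ({1, 2, 3}, {0, 2})]⟩,
   ⟨{s(0, 1), s(1, 3)}, 2, [({1, 2}, {0, 3})]⟩,
   ⟨{s(0, 1), s(1, 2)}, 3, [({0, 2, 3}, {1})]⟩,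
   ⟨{s(1, 2), s(2, 3)}, 0, [({0, 1, 2}, {0, 1, 3})]⟩,
   ⟨{s(0, 1), s(0, 3), s(2, 3)}, 1, [({0, 1, 2}, {0, 3})]⟩,
   ⟨{s(0, 1), s(1, 2), s(2, 3)}, 3, [({1, 3}, {0, 2})]⟩,
   ⟨{s(0, 1), s(1, 2), s(2, 3)}, 0, [({0, 2}, {1, 3})]⟩]

/-- The normal forms of words, ordered such that the functional of each of them kills all the
later ones. -/
def dualWords : List DualWord :=
  edgeWords 0 1 ++ edgeWords 0 2 ++ edgeWords 0 3 ++ edgeWords 1 2 ++ edgeWords 1 3 ++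
    edgeWords 2 3 ++ triangleWords 0 1 2 ++ triangleWords 0 1 3 ++ triangleWords 0 2 3 ++
    triangleWords 1 2 3 ++ fullWords

/-- The marked graphs of the words in normal form. -/
def normalForms : List (Finset (Sym2 (Fin 4)) × Fin 4) :=
  dualWords.map fun w => (w.edges, w.vertex)

/-- The span of the words of length `s` in normal form. -/
def normalSpan (s : ℕ) : Submodule kk (Cohits (Fin 4)) :=
  Submodule.span kk {y | ∃ p ∈ normalForms, graphWord s p.1 p.2 = y}

variable {s : ℕ} {i j k l : Fin 4}

theorem graphWord_mem_of_mem_normalForms {S : Finset (Sym2 (Fin 4))}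
    (h : (S, k) ∈ normalForms) : graphWord s S k ∈ normalSpan s :=
  Submodule.subset_span ⟨_, h, rfl⟩

theorem graphWord_mem_of_triangle {T T₁ T₂ : Finset (Sym2 (Fin 4))} (S : Finset (Sym2 (Fin 4)))
    (hS : S.card < s)
    (hT : T = insert s(i, j) S ∧ T₁ = insert s(j, k) S ∧ T₂ = insert s(i, k) S)
    (h₁ : graphWord s T₁ i ∈ normalSpan s) (h₂ : graphWord s T₂ j ∈ normalSpan s) :
    graphWord s T k ∈ normalSpan s := by
  obtain ⟨rfl, rfl, rfl⟩ := hT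
  rw [graphWord_insert hS]
  exact add_mem h₁ h₂

theorem graphWord_edge_mem (hs : 1 ≤ s) (hij : i ≠ j) (x : Fin 4) :
    graphWord s {s(i, j)} x ∈ normalSpan s := by
  have table : ∀ i j x : Fin 4, i ≠ j → ({s(i, j)}, x) ∈ normalForms ∨
      ({s(j, x)}, i) ∈ normalForms ∧ ({s(i, x)}, j) ∈ normalForms := by decide +kernel
  obtain h | ⟨h₁, h₂⟩ := table i j x hij
  · exact graphWord_mem_of_mem_normalForms h
  · exact graphWord_mem_of_triangle ∅ hs ⟨rfl, rfl, rfl⟩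
      (graphWord_mem_of_mem_normalForms h₁) (graphWord_mem_of_mem_normalForms h₂)

theorem graphWord_cherry_mem (hs : 2 ≤ s) (h : [i, j, k].Nodup) (x : Fin 4) :
    graphWord s {s(i, j), s(i, k)} x ∈ normalSpan s := by
  have table : ∀ i j k x : Fin 4, [i, j, k].Nodup → ({s(i, j), s(i, k)}, x) ∈ normalForms ∨
      x = j ∧ ({s(i, j), s(j, k)}, i) ∈ normalForms ∨
      x = k ∧ ({s(i, k), s(j, k)}, i) ∈ normalForms := by decide +kernel
  have toggle {i j k : Fin 4} (hij : i ≠ j) (h : ({s(i, j), s(j, k)}, i) ∈ normalForms) :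
      graphWord s {s(i, j), s(i, k)} j ∈ normalSpan s :=
    graphWord_mem_of_triangle {s(i, j)} hs (by grind [Sym2.eq_swap])
      (graphWord_edge_mem (one_le_two.trans hs) hij k) (graphWord_mem_of_mem_normalForms h)
  obtain hx | ⟨rfl, hx⟩ | ⟨rfl, hx⟩ := table i j k x h
  · exact graphWord_mem_of_mem_normalForms hx
  · exact toggle (by grind) hx
  · rw [Finset.pair_comm]
    exact toggle (by grind) (by rwa [Sym2.eq_swap (a := x)])

theorem graphWord_matching_mem (hs : 2 ≤ s) (h : [i, j, k, l].Nodup) :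
    graphWord s {s(i, j), s(k, l)} i ∈ normalSpan s :=
  graphWord_mem_of_triangle (i := k) (j := l) {s(i, j)} hs (by grind [Sym2.eq_swap])
    (graphWord_cherry_mem (i := i) (j := j) (k := l) hs (by grind) k)
    (graphWord_cherry_mem (i := i) (j := j) (k := k) hs (by grind) l)

theorem graphWord_triangle_mem (hs : 3 ≤ s) (h : [i, j, k].Nodup) :
    graphWord s {s(i, j), s(i, k), s(j, k)} i ∈ normalSpan s :=
  graphWord_mem_of_triangle (i := j) (j := k) {s(i, j), s(i, k)}
    (Finset.card_le_two.trans_lt hs) (by grind [Sym2.eq_swap])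
    (graphWord_cherry_mem (Nat.le_of_succ_le hs) h j)
    (graphWord_cherry_mem (Nat.le_of_succ_le hs) h k)

theorem graphWord_star_center_mem (h : [i, j, k, l].Nodup) :
    graphWord s {s(i, j), s(i, k), s(i, l)} i ∈ normalSpan s := by
  have table : ∀ i j k l : Fin 4, [i, j, k, l].Nodup →
      ({s(i, j), s(i, k), s(i, l)}, i) ∈ normalForms := by decide +kernel
  exact graphWord_mem_of_mem_normalForms (table i j k l h)

theorem graphWord_star_leaf_mem (hs : 3 ≤ s) (h : [i, j, k, l].Nodup) :
    graphWord s {s(i, j), s(j, k), s(j, l)} i ∈ normalSpan s := by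
  have table : ∀ i j k l : Fin 4, [i, j, k, l].Nodup →
      ({s(i, j), s(j, k), s(j, l)}, i) ∈ normalForms ∨
      ({s(i, j), s(i, k), s(i, l)}, j) ∈ normalForms := by decide +kernel
  obtain hi | hj := table i j k l h
  · exact graphWord_mem_of_mem_normalForms hi
  · obtain ⟨r, rfl⟩ := Nat.exists_eq_add_of_le' hs
    rw [← add_mem_cancel_right (graphWord_mem_of_mem_normalForms hj), graphWord_star]
    exact add_mem (graphWord_cherry_mem (Nat.le_add_left 2 _) (by grind) i)
      (graphWord_cherry_mem (Nat.le_add_left 2 _) (by grind) j)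

theorem graphWord_path_inner_mem (hs : 3 ≤ s) (h : [i, j, k, l].Nodup) :
    graphWord s {s(i, j), s(i, k), s(k, l)} i ∈ normalSpan s :=
  graphWord_mem_of_triangle (i := k) (j := l) {s(i, j), s(i, k)}
    (Finset.card_le_two.trans_lt hs) (by grind [Sym2.eq_swap])
    (graphWord_star_leaf_mem (i := k) (j := i) (k := j) (l := l) hs (by grind))
    (graphWord_cherry_mem (i := i) (j := j) (k := k) (Nat.le_of_succ_le hs) (by grind) l)

/-- The path with edges `ab`, `bc` and `cd`, and its end `d` marked. -/
def pathWord (s : ℕ) (a b c d : Fin 4) : Cohits (Fin 4) :=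
  graphWord s {s(a, b), s(b, c), s(c, d)} d

theorem pathWord_add_swap_last (hs : 3 ≤ s) (a b c d : Fin 4) :
    pathWord s a b c d + pathWord s a b d c = graphWord s {s(b, a), s(c, d)} b := by
  have h := graphWord_insert (S := {s(b, a), s(c, d)}) (Finset.card_le_two.trans_lt hs) c d b
  rw [Finset.insert_eq_of_mem (by simp)] at h
  rw [h, add_comm, pathWord, pathWord]
  congr 2 <;> grind [Sym2.eq_swap]

theorem pathWord_add_swap_outer (hs : 3 ≤ s) (a b c d : Fin 4) :
    pathWord s a b c d + pathWord s a d c b = graphWord s {s(b, c), s(b, d), s(c, d)} a := by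
  have h := graphWord_insert (S := {s(b, c), s(c, d)}) (Finset.card_le_two.trans_lt hs) b d a
  rw [Finset.insert_comm, h, add_comm, pathWord, pathWord]
  congr 2 <;> grind [Sym2.eq_swap]

theorem graphWord_triangle_eq (hs : 3 ≤ s) (a b c d : Fin 4) :
    graphWord s {s(b, c), s(b, d), s(c, d)} a = graphWord s {s(b, a), s(c, d)} b +
      graphWord s {s(c, a), s(b, d)} c + graphWord s {s(d, a), s(b, c)} d := by
  have outer₁ := pathWord_add_swap_outer hs a b c d
  have outer₂ := pathWord_add_swap_outer hs a c b d
  have outer₃ := pathWord_add_swap_outer hs a b d c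
  rw [show ({s(c, b), s(c, d), s(b, d)} : Finset (Sym2 (Fin 4))) = {s(b, c), s(b, d), s(c, d)} by
    grind [Sym2.eq_swap]] at outer₂
  rw [show ({s(b, d), s(b, c), s(d, c)} : Finset (Sym2 (Fin 4))) = {s(b, c), s(b, d), s(c, d)} by
    grind [Sym2.eq_swap]] at outer₃
  rw [← pathWord_add_swap_last hs, ← pathWord_add_swap_last hs, ← pathWord_add_swap_last hs]
  linear_combination (norm := match_scalars <;> rfl)
    (1 : kk) • outer₁ + (1 : kk) • outer₂ + (1 : kk) • outer₃

theorem graphWord_triangle_outside_mem (hs : 3 ≤ s) (h : [i, j, k, l].Nodup) :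
    graphWord s {s(j, k), s(j, l), s(k, l)} i ∈ normalSpan s := by
  rw [graphWord_triangle_eq hs]
  exact add_mem (add_mem (graphWord_matching_mem (Nat.le_of_succ_le hs) (by grind))
    (graphWord_matching_mem (Nat.le_of_succ_le hs) (by grind)))
    (graphWord_matching_mem (Nat.le_of_succ_le hs) (by grind))

theorem pathWord_mem (hs : 3 ≤ s) {a b c d : Fin 4} (h : [a, b, c, d].Nodup) :
    pathWord s a b c d ∈ normalSpan s := by
  have last {b c d : Fin 4} (h : [a, b, c, d].Nodup) (hd : pathWord s a b d c ∈ normalSpan s) :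
      pathWord s a b c d ∈ normalSpan s := by
    rw [← add_mem_cancel_right hd, pathWord_add_swap_last hs]
    exact graphWord_matching_mem (Nat.le_of_succ_le hs) (by grind)
  have outer {b c d : Fin 4} (h : [a, b, c, d].Nodup) (hd : pathWord s a d c b ∈ normalSpan s) :
      pathWord s a b c d ∈ normalSpan s := by
    rw [← add_mem_cancel_right hd, pathWord_add_swap_outer hs]
    exact graphWord_triangle_outside_mem hs h
  have normal {b c d : Fin 4} (h : ({s(a, b), s(b, c), s(c, d)}, d) ∈ normalForms) :
      pathWord s a b c d ∈ normalSpan s := graphWord_mem_of_mem_normalForms h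
  have table : ∀ a b c d : Fin 4, [a, b, c, d].Nodup →
      ∃ p ∈ [(b, c, d), (b, d, c), (c, d, b), (c, b, d), (d, b, c), (d, c, b)],
        ({s(a, p.1), s(p.1, p.2.1), s(p.2.1, p.2.2)}, p.2.2) ∈ normalForms := by decide +kernel
  obtain ⟨p, hp, h'⟩ := table a b c d h
  simp only [List.mem_cons, List.not_mem_nil, or_false] at hp
  obtain rfl | rfl | rfl | rfl | rfl | rfl := hp
  · exact normal h'
  · exact last h (normal h')
  · exact last h (outer (by grind) (normal h'))
  · exact last h (outer (by grind) (last (by grind) (normal h')))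
  · exact outer h (last (by grind) (normal h'))
  · exact outer h (normal h')

theorem graphWord_path_end_mem (hs : 3 ≤ s) (h : [i, j, k, l].Nodup) :
    graphWord s {s(i, j), s(j, k), s(k, l)} i ∈ normalSpan s := by
  convert pathWord_mem (a := l) (b := k) (c := j) (d := i) hs (by grind) using 1
  rw [pathWord]
  congr 1
  grind [Sym2.eq_swap]

theorem graphWord_paw_apex_mem (hs : 4 ≤ s) (h : [i, j, k, l].Nodup) :
    graphWord s {s(i, j), s(i, k), s(i, l), s(j, k)} i ∈ normalSpan s :=
  graphWord_mem_of_triangle (i := j) (j := k) {s(i, j), s(i, k), s(i, l)}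
    (Finset.card_le_three.trans_lt hs) (by grind [Sym2.eq_swap])
    (graphWord_star_leaf_mem (i := j) (j := i) (k := k) (l := l) (Nat.le_of_succ_le hs) (by grind))
    (graphWord_star_leaf_mem (i := k) (j := i) (k := j) (l := l) (Nat.le_of_succ_le hs) (by grind))

theorem graphWord_paw_base_mem (hs : 4 ≤ s) (h : [i, j, k, l].Nodup) :
    graphWord s {s(i, j), s(i, k), s(j, k), s(j, l)} i ∈ normalSpan s :=
  graphWord_mem_of_triangle (i := j) (j := k) {s(i, j), s(i, k), s(j, l)}
    (Finset.card_le_three.trans_lt hs) (by grind [Sym2.eq_swap])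
    (graphWord_path_inner_mem (i := j) (j := l) (k := i) (l := k) (Nat.le_of_succ_le hs) (by grind))
    (graphWord_path_end_mem (i := k) (j := i) (k := j) (l := l) (Nat.le_of_succ_le hs) (by grind))

theorem graphWord_paw_pendant_mem (hs : 4 ≤ s) (h : [i, j, k, l].Nodup) :
    graphWord s {s(i, j), s(j, k), s(j, l), s(k, l)} i ∈ normalSpan s := by
  have plucker := graphWord_insert_insert (S := {s(j, k), s(j, l)}) (Finset.insert_nonempty _ _)
    ((Nat.add_le_add_right Finset.card_le_two 2).trans hs) i j k l i
  rw [show (insert s(i, j) (insert s(k, l) {s(j, k), s(j, l)}) : Finset (Sym2 (Fin 4))) =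
      {s(i, j), s(j, k), s(j, l), s(k, l)} by grind,
    show (insert s(j, k) (insert s(i, l) {s(j, k), s(j, l)}) : Finset (Sym2 (Fin 4))) =
      {s(i, l), s(l, j), s(j, k)} by grind [Sym2.eq_swap],
    show (insert s(i, k) (insert s(j, l) {s(j, k), s(j, l)}) : Finset (Sym2 (Fin 4))) =
      {s(i, k), s(k, j), s(j, l)} by grind [Sym2.eq_swap]] at plucker
  rw [plucker]
  exact add_mem (graphWord_path_end_mem (Nat.le_of_succ_le hs) (by grind))
    (graphWord_path_end_mem (Nat.le_of_succ_le hs) (by grind))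

theorem graphWord_cycle_mem (hs : 4 ≤ s) (h : [i, j, k, l].Nodup) :
    graphWord s {s(i, j), s(j, k), s(k, l), s(l, i)} i ∈ normalSpan s :=
  graphWord_mem_of_triangle (i := k) (j := l) {s(i, j), s(j, k), s(l, i)}
    (Finset.card_le_three.trans_lt hs) (by grind [Sym2.eq_swap])
    (graphWord_path_end_mem (i := k) (j := j) (k := i) (l := l) (Nat.le_of_succ_le hs) (by grind))
    (graphWord_paw_pendant_mem (i := l) (j := i) (k := j) (l := k) hs (by grind))

end NormalForms

section Spanning

/-- The edges of the complete graph on four vertices. -/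
def edges : Finset (Sym2 (Fin 4)) := {s(0, 1), s(0, 2), s(0, 3), s(1, 2), s(1, 3), s(2, 3)}

variable {s : ℕ} {T : Finset (Sym2 (Fin 4))}

theorem graphWord_mem_of_card_eq_one (hs : 1 ≤ s) (hT : T ∈ edges.powersetCard 1) (x : Fin 4) :
    graphWord s T x ∈ normalSpan s := by
  have table : ∀ T ∈ edges.powersetCard 1, ∃ i j : Fin 4, i ≠ j ∧ T = {s(i, j)} := by
    decide +kernel
  obtain ⟨i, j, hij, rfl⟩ := table T hT
  exact graphWord_edge_mem hs hij x

theorem graphWord_mem_of_card_eq_two (hs : 2 ≤ s) (hT : T ∈ edges.powersetCard 2) (i : Fin 4) :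
    graphWord s T i ∈ normalSpan s := by
  have table : ∀ (i : Fin 4) (T : edges.powersetCard 2), ∃ j k l : Fin 4, [i, j, k, l].Nodup ∧
      T.1 ∈ [{s(i, j), s(i, k)}, {s(j, i), s(j, k)}, {s(j, k), s(j, l)}, {s(i, j), s(k, l)}] := by
    decide +kernel
  obtain ⟨j, k, l, h, hmem⟩ := table i ⟨T, hT⟩
  simp only [List.mem_cons, List.not_mem_nil, or_false] at hmem
  obtain rfl | rfl | rfl | rfl := hmem
  · exact graphWord_cherry_mem hs (by grind) i
  · exact graphWord_cherry_mem hs (by grind) i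
  · exact graphWord_cherry_mem hs (by grind) i
  · exact graphWord_matching_mem hs h

theorem graphWord_mem_of_card_eq_three (hs : 3 ≤ s) (hT : T ∈ edges.powersetCard 3)
    (i : Fin 4) : graphWord s T i ∈ normalSpan s := by
  have table : ∀ (i : Fin 4) (T : edges.powersetCard 3), ∃ j k l : Fin 4, [i, j, k, l].Nodup ∧
      T.1 ∈ [{s(i, j), s(i, k), s(j, k)}, {s(j, k), s(j, l), s(k, l)}, {s(i, j), s(i, k), s(i, l)},
        {s(i, j), s(j, k), s(j, l)}, {s(i, j), s(i, k), s(k, l)}, {s(i, j), s(j, k), s(k, l)}] := by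
    decide +kernel
  obtain ⟨j, k, l, h, hmem⟩ := table i ⟨T, hT⟩
  simp only [List.mem_cons, List.not_mem_nil, or_false] at hmem
  obtain rfl | rfl | rfl | rfl | rfl | rfl := hmem
  · exact graphWord_triangle_mem hs (by grind)
  · exact graphWord_triangle_outside_mem hs h
  · exact graphWord_star_center_mem h
  · exact graphWord_star_leaf_mem hs h
  · exact graphWord_path_inner_mem hs h
  · exact graphWord_path_end_mem hs h

theorem graphWord_mem_of_card_eq_four (hs : 4 ≤ s) (hT : T ∈ edges.powersetCard 4)
    (i : Fin 4) : graphWord s T i ∈ normalSpan s := by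
  have table : ∀ (i : Fin 4) (T : edges.powersetCard 4), ∃ j k l : Fin 4, [i, j, k, l].Nodup ∧
      T.1 ∈ [{s(i, j), s(i, k), s(i, l), s(j, k)}, {s(i, j), s(i, k), s(j, k), s(j, l)},
        {s(i, j), s(j, k), s(j, l), s(k, l)}, {s(i, j), s(j, k), s(k, l), s(l, i)}] := by
    decide +kernel
  obtain ⟨j, k, l, h, hmem⟩ := table i ⟨T, hT⟩
  simp only [List.mem_cons, List.not_mem_nil, or_false] at hmem
  obtain rfl | rfl | rfl | rfl := hmem
  · exact graphWord_paw_apex_mem hs h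
  · exact graphWord_paw_base_mem hs h
  · exact graphWord_paw_pendant_mem hs h
  · exact graphWord_cycle_mem hs h

theorem graphWord_mem_normalSpan (hT : T ⊆ edges) (hne : T.Nonempty) (hcard : T.card ≤ 4)
    (x : Fin 4) : graphWord s T x ∈ normalSpan s := by
  obtain hs | hs := lt_or_ge s T.card
  · rw [graphWord_eq_zero hs]
    exact zero_mem _
  have hpos := hne.card_pos
  have hmem := Finset.mem_powersetCard.2 ⟨hT, rfl⟩
  generalize T.card = c at hs hcard hpos hmem
  interval_cases c
  · exact graphWord_mem_of_card_eq_one hs hmem x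
  · exact graphWord_mem_of_card_eq_two hs hmem x
  · exact graphWord_mem_of_card_eq_three hs hmem x
  · exact graphWord_mem_of_card_eq_four hs hmem x

theorem edgeOp_eq_zero {a : Sym2 (Fin 4)} (ha : a ∉ edges) : edgeOp a = 0 := by
  induction a with | h i j
  have loop : ∀ i j : Fin 4, s(i, j) ∉ edges → i = j := by decide +kernel
  rw [edgeOp_mk, loop i j ha, op_self]

theorem normalForms_spec {p : Finset (Sym2 (Fin 4)) × Fin 4} (hp : p ∈ normalForms) :
    p.1 ⊆ edges ∧ p.1.Nonempty ∧ p.1.card ≤ 3 := by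
  have table : normalForms.all fun p => p.1 ⊆ edges ∧ p.1.Nonempty ∧ p.1.card ≤ 3 := by
    decide +kernel
  exact of_decide_eq_true (List.all_eq_true.1 table p hp)

theorem edgeOp_mem_normalSpan (a : Sym2 (Fin 4)) {y : Cohits (Fin 4)} (hy : y ∈ normalSpan s) :
    edgeOp a y ∈ normalSpan (s + 1) := by
  by_cases ha : a ∈ edges
  swap
  · rw [edgeOp_eq_zero ha]
    exact zero_mem _
  induction hy using Submodule.span_induction with
  | zero => rw [map_zero]; exact zero_mem _
  | add y z _ _ hy hz => rw [map_add]; exact add_mem hy hz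
  | smul c y _ hy => rw [map_smul]; exact Submodule.smul_mem _ c hy
  | mem y hy =>
    obtain ⟨⟨S, k⟩, hp, rfl⟩ := hy
    obtain ⟨hS, hne, hcard⟩ := normalForms_spec hp
    obtain hs | hs := lt_or_ge s S.card
    · rw [graphWord_eq_zero hs, map_zero]
      exact zero_mem _
    rw [edgeOp_graphWord hne hs]
    exact graphWord_mem_normalSpan (Finset.insert_subset ha hS) (Finset.insert_nonempty a S)
      ((Finset.card_insert_le a S).trans (Nat.succ_le_succ hcard)) k

theorem word_mem_normalSpan {m : Multiset (Sym2 (Fin 4))} (hm : m ≠ 0) (k : Fin 4) :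
    word m k ∈ normalSpan m.card := by
  induction m using Multiset.induction with
  | empty => exact absurd rfl hm
  | cons a m ih =>
    rw [word_cons, Multiset.card_cons]
    obtain rfl | hm' := eq_or_ne m 0
    · by_cases ha : a ∈ edges
      · rw [word_zero, ← graphWord_one]
        exact graphWord_mem_of_card_eq_one le_rfl
          (Finset.mem_powersetCard.2 ⟨Finset.singleton_subset_iff.2 ha, rfl⟩) k
      · rw [edgeOp_eq_zero ha]
        exact zero_mem _
    · exact edgeOp_mem_normalSpan a (ih hm')

end Spanning

/-! ### Functionals detecting words -/

section Spikes

theorem coeff_two_nsmul_sq {σ : Type*} (e : σ →₀ ℕ) (f : MvPolynomial σ kk) :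
    coeff (2 • e) (f ^ 2) = coeff e f := by
  rw [← expand_zmod, coeff_expand_smul 2 two_ne_zero]

theorem coeff_sq_of_odd {σ : Type*} {e : σ →₀ ℕ} {i : σ} (h : Odd (e i))
    (f : MvPolynomial σ kk) : coeff e (f ^ 2) = 0 := by
  rw [← expand_zmod, coeff_expand_of_not_dvd _ h.not_two_dvd_nat]

theorem coeff_X_mul_sq_of_odd {σ : Type*} {e : σ →₀ ℕ} {i j : σ} (hij : i ≠ j) (h : Odd (e i))
    (f : MvPolynomial σ kk) : coeff e (X j * f ^ 2) = 0 := by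
  classical
  rw [coeff_X_mul']
  split_ifs
  · refine coeff_sq_of_odd (i := i) ?_ f
    rwa [Finsupp.tsub_apply, Finsupp.single_eq_of_ne hij, tsub_zero]
  · rfl

theorem monomial_eq_prod_X_mul_sq {σ : Type*} [Fintype σ] (d : σ →₀ ℕ) :
    (monomial d 1 : MvPolynomial σ kk) =
      (∏ i with Odd (d i), X i) * monomial (d.mapRange (· / 2) rfl) 1 ^ 2 := by
  have as_prod (e : σ →₀ ℕ) : (monomial e 1 : MvPolynomial σ kk) = ∏ i, X i ^ e i := by
    rw [monomial_eq, C_1, one_mul, Finsupp.prod_fintype _ _ fun i => pow_zero _]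
  rw [as_prod, as_prod, Finset.prod_filter, ← Finset.prod_pow, ← Finset.prod_mul_distrib]
  refine Finset.prod_congr rfl fun i _ => ?_
  rw [Finsupp.mapRange_apply, ← pow_mul]
  split_ifs with h
  · rw [← pow_succ', Nat.div_two_mul_two_add_one_of_odd h]
  · rw [one_mul, Nat.div_two_mul_two_of_even (Nat.not_odd_iff_even.1 h)]

/-- The exponent `(2 ^ (s + 1) - 1, 2 ^ s - 1)` of a spike in two variables. -/
def spikeExp : ℕ → Fin 2 →₀ ℕ
  | 0 => Finsupp.single 0 1
  | s + 1 => Finsupp.single 0 1 + Finsupp.single 1 1 + 2 • spikeExp s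

theorem odd_spikeExp_succ (s : ℕ) (i : Fin 2) : Odd (spikeExp (s + 1) i) := by
  refine ⟨spikeExp s i, ?_⟩
  fin_cases i <;> simp [spikeExp, add_comm]

theorem coeff_spikeExp_succ (s : ℕ) (f : MvPolynomial (Fin 2) kk) :
    coeff (spikeExp (s + 1)) (X 0 * X 1 * f ^ 2) = coeff (spikeExp s) f := by
  rw [X, X, monomial_mul, one_mul, spikeExp, coeff_monomial_mul, one_mul, coeff_two_nsmul_sq]

theorem exists_steenrodSq_sq {σ : Type*} (t : ℕ) (g : MvPolynomial σ kk) :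
    ∃ h, steenrodSq t (g ^ 2) = h ^ 2 := by
  obtain ⟨u, rfl | rfl⟩ := t.even_or_odd'
  · exact ⟨_, steenrodSq_two_mul_sq u g⟩
  · exact ⟨0, by rw [steenrodSq_two_mul_add_one_sq, zero_pow two_ne_zero]⟩

theorem exists_steenrodSq_X_mul_sq {σ : Type*} (t : ℕ) (i : σ) (g : MvPolynomial σ kk) :
    ∃ h h', steenrodSq t (X i * g ^ 2) = X i * h ^ 2 + h' ^ 2 := by
  cases t with
  | zero => exact ⟨g, 0, by rw [steenrodSq_zero_apply, zero_pow two_ne_zero, add_zero]⟩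
  | succ t =>
    obtain ⟨h, hh⟩ := exists_steenrodSq_sq (t + 1) g
    obtain ⟨h', hh'⟩ := exists_steenrodSq_sq t g
    exact ⟨h, X i * h', by rw [steenrodSq_succ_X_mul, hh, hh', mul_pow]⟩

theorem coeff_single_steenrodSq_succ {σ : Type*} (i : σ) (t : ℕ) (f : MvPolynomial σ kk) :
    coeff (Finsupp.single i 1) (steenrodSq (t + 1) f) = 0 := by
  induction f using MvPolynomial.induction_on' with
  | add p q hp hq => rw [map_add, coeff_add, hp, hq, add_zero]
  | monomial u a =>
    obtain rfl | hu := eq_or_ne u 0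
    · rw [← C_apply, ← coeff_steenrod, steenrod_C, Polynomial.coeff_C_succ, coeff_zero]
    · refine (isHomogeneous_steenrodSq_monomial u a (t + 1)).coeff_eq_zero ?_
      rw [Finsupp.degree_single]
      have := Nat.pos_of_ne_zero (mt (Finsupp.degree_eq_zero_iff u).1 hu)
      omega

theorem coeff_spikeExp_steenrodSq_X_mul_X_mul_sq (s t : ℕ) (g : MvPolynomial (Fin 2) kk)
    (ih : ∀ t, coeff (spikeExp s) (steenrodSq (t + 1) g) = 0) :
    coeff (spikeExp (s + 1)) (steenrodSq (t + 1) (X 0 * X 1 * g ^ 2)) = 0 := by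
  obtain ⟨h, h', hX⟩ := exists_steenrodSq_X_mul_sq t 1 g
  obtain ⟨k, hk⟩ := exists_steenrodSq_sq t g
  have hodd := odd_spikeExp_succ s
  have split : steenrodSq (t + 1) (X 0 * X 1 * g ^ 2) = X 0 * X 1 * steenrodSq (t + 1) (g ^ 2)
      + X 0 * (X 1 * k) ^ 2 + X 1 * (X 0 * h) ^ 2 + (X 0 * h') ^ 2 := by
    rw [mul_assoc, steenrodSq_succ_X_mul, steenrodSq_succ_X_mul, hX, hk]
    ring
  rw [split, coeff_add, coeff_add, coeff_add, coeff_X_mul_sq_of_odd one_ne_zero (hodd 1),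
    coeff_X_mul_sq_of_odd zero_ne_one (hodd 0), coeff_sq_of_odd (hodd 0), add_zero, add_zero,
    add_zero]
  obtain ⟨u, hu | hu⟩ := (t + 1).even_or_odd'
  · obtain ⟨v, rfl⟩ := Nat.exists_eq_succ_of_ne_zero (show u ≠ 0 by omega)
    rw [hu, steenrodSq_two_mul_sq, coeff_spikeExp_succ]
    exact ih v
  · rw [hu, steenrodSq_two_mul_add_one_sq, mul_zero, coeff_zero]

theorem coeff_spikeExp_steenrodSq_succ (s t : ℕ) (f : MvPolynomial (Fin 2) kk) :
    coeff (spikeExp s) (steenrodSq (t + 1) f) = 0 := by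
  induction s generalizing t f with
  | zero => exact coeff_single_steenrodSq_succ 0 t f
  | succ s ih =>
    induction f using MvPolynomial.induction_on' with
    | add p q hp hq => rw [map_add, coeff_add, hp, hq, add_zero]
    | monomial u a =>
      rw [show monomial u a = a • monomial u (1 : kk) by rw [smul_monomial, smul_eq_mul, mul_one],
        map_smul, coeff_smul, monomial_eq_prod_X_mul_sq]
      generalize monomial _ (1 : kk) = g
      refine smul_eq_zero_of_right a ?_
      have hodd := odd_spikeExp_succ s
      obtain ⟨k, hk⟩ := exists_steenrodSq_sq (t + 1) g
      have subsets : ∀ O : Finset (Fin 2), O = ∅ ∨ O = {0} ∨ O = {1} ∨ O = {0, 1} := by decide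
      obtain h | h | h | h := subsets {i | Odd (u i)} <;> rw [h]
      · rw [Finset.prod_empty, one_mul, hk, coeff_sq_of_odd (hodd 0)]
      · obtain ⟨h, h', hX⟩ := exists_steenrodSq_X_mul_sq (t + 1) 0 g
        rw [Finset.prod_singleton, hX, coeff_add, coeff_X_mul_sq_of_odd one_ne_zero (hodd 1),
          coeff_sq_of_odd (hodd 0), add_zero]
      · obtain ⟨h, h', hX⟩ := exists_steenrodSq_X_mul_sq (t + 1) 1 g
        rw [Finset.prod_singleton, hX, coeff_add, coeff_X_mul_sq_of_odd zero_ne_one (hodd 0),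
          coeff_sq_of_odd (hodd 0), add_zero]
      · rw [Finset.prod_pair zero_ne_one]
        exact coeff_spikeExp_steenrodSq_X_mul_X_mul_sq s t g fun t => ih t g

end Spikes

section Functionals

variable {σ : Type*}

/-- The functional `ψ(A, s)` which substitutes linear forms in two variables, the rows of `A`, and
reads off the coefficient of a spike. Since spikes do not occur in hit polynomials, it is
well-defined on cohits. -/
def spikeFunctional (A : Matrix σ (Fin 2) kk) (s : ℕ) : Cohits σ →ₗ[kk] kk :=
  hit.liftQ (lcoeff kk (spikeExp s) ∘ₗ (linSubst A).toLinearMap) <| Submodule.span_le.2 <| by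
    rintro _ ⟨t, g, rfl⟩
    change coeff (spikeExp s) (linSubst A (steenrodSq (t + 1) g)) = 0
    rw [← steenrodSq_linSubst, coeff_spikeExp_steenrodSq_succ]

theorem spikeFunctional_cls (A : Matrix σ (Fin 2) kk) (s : ℕ) (f : MvPolynomial σ kk) :
    spikeFunctional A s (cls f) = coeff (spikeExp s) (linSubst A f) := rfl

/-- The `2 × 2` minor of `A` on the rows `i` and `j`. -/
def minor (A : Matrix σ (Fin 2) kk) (i j : σ) : kk := A i 0 * A j 1 + A i 1 * A j 0

theorem minor_comm (A : Matrix σ (Fin 2) kk) (i j : σ) : minor A i j = minor A j i := by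
  rw [minor, minor]
  ring

theorem spikeFunctional_xcls (A : Matrix σ (Fin 2) kk) (k : σ) :
    spikeFunctional A 0 (xcls k) = A k 0 := by
  rw [xcls, spikeFunctional_cls, linSubst_X, Fin.sum_univ_two, spikeExp]
  simp [coeff_X, Finsupp.single_left_inj]

theorem spikeFunctional_op (A : Matrix σ (Fin 2) kk) (s : ℕ) (i j : σ) (y : Cohits σ) :
    spikeFunctional A (s + 1) (op i j y) = minor A i j * spikeFunctional A s y := by
  obtain ⟨f, rfl⟩ := cls_surjective y
  rw [op_cls, spikeFunctional_cls, spikeFunctional_cls, map_mul, map_mul, map_pow, linSubst_X,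
    linSubst_X, Fin.sum_univ_two, Fin.sum_univ_two, minor]
  generalize linSubst A f = g
  have expand : (A i 0 • X 0 + A i 1 • X 1) * (A j 0 • X 0 + A j 1 • X 1) * g ^ 2 =
      (A i 0 * A j 0) • (X 0 * g) ^ 2 + (A i 1 * A j 1) • (X 1 * g) ^ 2
        + (A i 0 * A j 1 + A i 1 * A j 0) • (X 0 * X 1 * g ^ 2) := by
    simp only [smul_eq_C_mul, C_add, C_mul]
    ring
  have hodd := odd_spikeExp_succ s 0
  rw [expand, coeff_add, coeff_add, coeff_smul, coeff_smul, coeff_smul, coeff_sq_of_odd hodd,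
    coeff_sq_of_odd hodd, coeff_spikeExp_succ, smul_zero, smul_zero, zero_add, zero_add,
    smul_eq_mul]

/-- The minor of `A` on the endpoints of an edge. -/
def edgeMinor (A : Matrix σ (Fin 2) kk) : Sym2 σ → kk := Sym2.lift ⟨minor A, minor_comm A⟩

theorem spikeFunctional_edgeOp (A : Matrix σ (Fin 2) kk) (s : ℕ) (a : Sym2 σ) (y : Cohits σ) :
    spikeFunctional A (s + 1) (edgeOp a y) = edgeMinor A a * spikeFunctional A s y := by
  induction a with | h i j
  exact spikeFunctional_op A s i j y

theorem spikeFunctional_word (A : Matrix (Fin 4) (Fin 2) kk) (m : Multiset (Sym2 (Fin 4)))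
    (k : Fin 4) :
    spikeFunctional A m.card (word m k) = (m.map (edgeMinor A)).prod * A k 0 := by
  induction m using Multiset.induction with
  | empty => rw [Multiset.map_zero, Multiset.prod_zero, one_mul]; exact spikeFunctional_xcls A k
  | cons a m ih =>
    rw [word_cons, Multiset.card_cons, spikeFunctional_edgeOp, ih, Multiset.map_cons,
      Multiset.prod_cons, mul_assoc]

theorem prod_map_eq_prod_toFinset {α : Type*} [DecidableEq α] (m : Multiset α) (f : α → kk) :
    (m.map f).prod = ∏ a ∈ m.toFinset, f a := by
  have idem : ∀ (x : kk) (n : ℕ), n ≠ 0 → x ^ n = x := by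
    intro x n hn
    obtain rfl | rfl : x = 0 ∨ x = 1 := by revert x; decide
    · exact zero_pow hn
    · exact one_pow n
  rw [Finset.prod_multiset_map_count]
  refine Finset.prod_congr rfl fun a ha => idem _ _ ?_
  exact (Multiset.count_pos.2 (Multiset.mem_toFinset.1 ha)).ne'

theorem spikeFunctional_graphWord (A : Matrix (Fin 4) (Fin 2) kk) {s : ℕ}
    {S : Finset (Sym2 (Fin 4))} (hS : S.Nonempty) (h : S.card ≤ s) (k : Fin 4) :
    spikeFunctional A s (graphWord s S k) = (∏ a ∈ S, edgeMinor A a) * A k 0 := by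
  obtain ⟨m, rfl, rfl⟩ := exists_multiset_toFinset_eq hS h
  rw [← word_eq_graphWord, spikeFunctional_word, prod_map_eq_prod_toFinset]

end Functionals

section Separation

theorem eq_zero_of_pairwise {R M : Type*} [Ring R] [AddCommGroup M] [Module R M]
    {L : List (M × Module.Dual R M)} (diag : ∀ p ∈ L, p.1 = 0 ∨ p.2 p.1 = 1)
    (tri : L.Pairwise fun p q => p.2 q.1 = 0) {x : M}
    (hx : x ∈ Submodule.span R {y | ∃ p ∈ L, p.1 = y}) (hφ : ∀ p ∈ L, p.2 x = 0) : x = 0 := by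
  induction L with
  | nil => simpa using hx
  | cons p L ih =>
    rw [List.forall_mem_cons] at diag hφ
    rw [List.pairwise_cons] at tri
    refine ih diag.2 tri.2 ?_ hφ.2
    have insert_eq : {y | ∃ q ∈ p :: L, q.1 = y} = insert p.1 {y | ∃ q ∈ L, q.1 = y} := by
      ext y
      simp [eq_comm]
    rw [insert_eq, Submodule.mem_span_insert] at hx
    obtain ⟨c, y, hy, rfl⟩ := hx
    have hker : Submodule.span R {y | ∃ q ∈ L, q.1 = y} ≤ LinearMap.ker p.2 :=
      Submodule.span_le.2 fun _ ⟨q, hq, h⟩ => h ▸ tri.1 q hq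
    have hpy : p.2 y = 0 := hker hy
    have hc : c • p.1 = 0 := by
      obtain h | h := diag.1
      · rw [h, smul_zero]
      · have := hφ.1
        rw [map_add, map_smul, h, hpy, add_zero, smul_eq_mul, mul_one] at this
        rw [this, zero_smul]
    rwa [hc, zero_add]

/-- The matrix whose columns are the indicator vectors of `V` and `W`. -/
def flag (V W : Finset (Fin 4)) : Matrix (Fin 4) (Fin 2) kk :=
  fun i => ![if i ∈ V then 1 else 0, if i ∈ W then 1 else 0]

namespace DualWord

/-- The class of a normal form with `s` operators. -/
def toCohits (s : ℕ) (w : DualWord) : Cohits (Fin 4) := graphWord s w.edges w.vertex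

/-- The functional on words with `s` operators detecting a normal form. -/
def functional (s : ℕ) (w : DualWord) : Cohits (Fin 4) →ₗ[kk] kk :=
  (w.flags.map fun F => spikeFunctional (flag F.1 F.2) s).sum

/-- The value on the normal form `w'` of the functional of `w`. -/
def pairing (w w' : DualWord) : kk :=
  (w.flags.map fun F =>
    (∏ a ∈ w'.edges, edgeMinor (flag F.1 F.2) a) * flag F.1 F.2 w'.vertex 0).sum

theorem functional_apply (s : ℕ) (w : DualWord) (y : Cohits (Fin 4)) :
    w.functional s y = (w.flags.map fun F => spikeFunctional (flag F.1 F.2) s y).sum := by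
  rw [functional, ← LinearMap.applyₗ_apply_apply (R := kk) y, map_list_sum, List.map_map]
  rfl

theorem functional_toCohits {s : ℕ} (w w' : DualWord) (hne : w'.edges.Nonempty)
    (hs : w'.edges.card ≤ s) : w.functional s (w'.toCohits s) = w.pairing w' := by
  simp only [functional_apply, toCohits, spikeFunctional_graphWord _ hne hs, pairing]

end DualWord

theorem pairing_dualWords :
    (dualWords.all fun w => w.pairing w = 1) ∧
      dualWords.Pairwise fun w w' => w.pairing w' = 0 := by
  decide +kernel

theorem eq_zero_of_mem_normalSpan {s : ℕ} {x : Cohits (Fin 4)} (hx : x ∈ normalSpan s)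
    (hψ : ∀ A, spikeFunctional A s x = 0) : x = 0 := by
  have spec {w : DualWord} (hw : w ∈ dualWords) : w.edges.Nonempty :=
    (normalForms_spec (List.mem_map_of_mem hw)).2.1
  refine eq_zero_of_pairwise (R := kk)
    (L := dualWords.map fun w => (w.toCohits s, w.functional s)) ?_ ?_ ?_ ?_
  · rw [List.forall_mem_map]
    intro w hw
    obtain hs | hs := lt_or_ge s w.edges.card
    · exact .inl (graphWord_eq_zero hs w.vertex)
    · refine .inr ((w.functional_toCohits w (spec hw) hs).trans ?_)
      exact of_decide_eq_true (List.all_eq_true.1 pairing_dualWords.1 w hw)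
  · rw [List.pairwise_map]
    refine pairing_dualWords.2.imp_of_mem fun {w w'} _ hw' h => ?_
    obtain hs | hs := lt_or_ge s w'.edges.card
    · exact (congrArg _ (graphWord_eq_zero hs w'.vertex)).trans (map_zero _)
    · rw [w.functional_toCohits w' (spec hw') hs, h]
  · rw [normalSpan, normalForms] at hx
    simpa only [List.mem_map, exists_exists_and_eq_and, DualWord.toCohits] using hx
  · rw [List.forall_mem_map]
    intro w _
    simp only [DualWord.functional_apply, hψ, List.map_const', List.sum_replicate, smul_zero]

end Separation

/-! ### The kernel of the Kameko map -/

section KamekoKernel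

theorem homog_le_of_monomial_mem {n : ℕ} {N : Submodule kk P4}
    (h : ∀ d : Fin 4 →₀ ℕ, d.degree = n → monomial d 1 ∈ N) : homog n ≤ N := by
  intro f hf
  rw [f.as_sum]
  refine Submodule.sum_mem _ fun d hd => ?_
  have hdeg : d.degree = n :=
    by_contra fun hne => mem_support_iff.1 hd (IsHomogeneous.coeff_eq_zero hf hne)
  rw [← mul_one (coeff d f), ← smul_eq_mul, ← smul_monomial]
  exact Submodule.smul_mem _ _ (h d hdeg)

theorem exists_monomial_eq_X_mul {σ : Type*} {d : σ →₀ ℕ} (hd : d ≠ 0) :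
    ∃ i g, (monomial d 1 : MvPolynomial σ kk) = X i * g := by
  obtain ⟨i, hi⟩ := Finsupp.ne_iff.1 hd
  have hle : Finsupp.single i 1 ≤ d := Finsupp.single_le_iff.2 (Nat.one_le_iff_ne_zero.2 hi)
  refine ⟨i, monomial (d - Finsupp.single i 1) 1, ?_⟩
  rw [X, monomial_mul, one_mul, add_tsub_cancel_of_le hle]

theorem card_odd_add_two_mul_degree {σ : Type*} [Fintype σ] (d : σ →₀ ℕ) :
    ({i | Odd (d i)} : Finset σ).card + 2 * (d.mapRange (· / 2) rfl).degree = d.degree := by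
  simp only [Finset.card_filter, Finsupp.degree_eq_sum, Finset.mul_sum, ← Finset.sum_add_distrib,
    Finsupp.mapRange_apply]
  refine Finset.sum_congr rfl fun i _ => ?_
  split_ifs with h
  · rw [add_comm, Nat.two_mul_div_two_add_one_of_odd h]
  · rw [zero_add, Nat.two_mul_div_two_of_even (Nat.not_odd_iff_even.1 h)]

theorem homog_two_mul_add_two_le {n : ℕ} {N : Submodule kk P4}
    (sq_mem : ∀ i g, (X i * g) ^ 2 ∈ N)
    (pair_mem : ∀ i j, ∀ g ∈ homog n, i ≠ j → X i * X j * g ^ 2 ∈ N)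
    (full_mem : ∀ g, (∀ i, X i * g ∈ homog n) → X 0 * X 1 * X 2 * X 3 * g ^ 2 ∈ N) :
    homog (2 * n + 2) ≤ N := by
  refine homog_le_of_monomial_mem fun d hd => ?_
  have hcard := card_odd_add_two_mul_degree d
  rw [monomial_eq_prod_X_mul_sq]
  generalize d.mapRange (· / 2) rfl = h at hcard ⊢
  generalize ({i | Odd (d i)} : Finset (Fin 4)) = O at hcard ⊢
  have hle := O.card_le_univ
  rw [Fintype.card_fin] at hle
  obtain h₀ | h₂ | h₄ : O.card = 0 ∨ O.card = 2 ∨ O.card = 4 := by omega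
  · have hne : h ≠ 0 := by
      rintro rfl
      rw [map_zero] at hcard
      omega
    obtain ⟨i, g, hg⟩ := exists_monomial_eq_X_mul hne
    rw [Finset.card_eq_zero.1 h₀, Finset.prod_empty, one_mul, hg]
    exact sq_mem i g
  · obtain ⟨i, j, hij, rfl⟩ := Finset.card_eq_two.1 h₂
    rw [Finset.prod_pair hij]
    exact pair_mem i j _ (isHomogeneous_monomial 1 (by omega)) hij
  · rw [(Finset.card_eq_iff_eq_univ O).1 h₄, Fin.prod_univ_four]
    refine full_mem _ fun i => ?_
    have := (isHomogeneous_X kk i).mul (isHomogeneous_monomial (1 : kk) (d := h) rfl)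
    rwa [show 1 + h.degree = n by omega] at this

theorem X_mul_X_mul_X_mul_X_eq {l : List (Fin 4)} (h : l.Perm [0, 1, 2, 3]) :
    (l.map X).prod = (X 0 * X 1 * X 2 * X 3 : P4) := by
  rw [(h.map X).prod_eq]
  simp [mul_assoc]

/-- The span of the classes obtained from the variables by applying `s` operators. -/
def wordSpan (s : ℕ) : Submodule kk (Cohits (Fin 4)) :=
  Submodule.span kk {y | ∃ m k, Multiset.card m = s ∧ word m k = y}

theorem op_mem_wordSpan {s : ℕ} {y : Cohits (Fin 4)} (hy : y ∈ wordSpan s) (i j : Fin 4) :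
    op i j y ∈ wordSpan (s + 1) := by
  suffices wordSpan s ≤ (wordSpan (s + 1)).comap (op i j) from this hy
  refine Submodule.span_le.2 ?_
  rintro _ ⟨m, k, rfl, rfl⟩
  exact Submodule.subset_span ⟨s(i, j) ::ₘ m, k, Multiset.card_cons _ m, word_cons _ m k⟩

theorem op_cls_mem_wordSpan {s n : ℕ} (hn : n + 2 = 3 * 2 ^ s) {g : P4} (hg : g ∈ homog n)
    (i j : Fin 4) : op i j (cls g) ∈ wordSpan (s + 1) := by
  induction s generalizing n g i j with
  | zero =>
    obtain rfl : n = 1 := by omega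
    rw [homog, homogeneousSubmodule_one_eq_span_X] at hg
    suffices Submodule.span kk (Set.range X) ≤ (wordSpan 0).comap cls from
      op_mem_wordSpan (this hg) i j
    refine Submodule.span_le.2 ?_
    rintro _ ⟨k, rfl⟩
    exact Submodule.subset_span ⟨0, k, rfl, rfl⟩
  | succ s ih =>
    obtain ⟨r, rfl⟩ : ∃ r, n = 2 * r + 2 := ⟨3 * 2 ^ s - 2, by omega⟩
    have ih {g} (hg : g ∈ homog r) := ih (by omega) hg
    suffices homog (2 * r + 2) ≤ (wordSpan (s + 1 + 1)).comap (op i j ∘ₗ cls) from this hg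
    refine homog_two_mul_add_two_le (fun k g => ?_) (fun k l g hg _ => ?_) fun g hg => ?_
    · rw [Submodule.mem_comap, LinearMap.comp_apply, cls_eq_zero_iff.2 (X_mul_sq_mem_hit k g),
        map_zero]
      exact zero_mem _
    · exact op_mem_wordSpan (ih hg k l) i j
    · obtain rfl | hij := eq_or_ne i j
      · rw [Submodule.mem_comap, LinearMap.comp_apply, op_self]
        exact Submodule.zero_mem _
      have complete : ∀ i j : Fin 4, i ≠ j → ∃ k l, [k, i, j, l].Perm [0, 1, 2, 3] := by decide
      obtain ⟨k, l, hkl⟩ := complete i j hij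
      have reorder : X 0 * X 1 * X 2 * X 3 * g ^ 2 = X k * (X i * X j * X l * g ^ 2) := by
        rw [← X_mul_X_mul_X_mul_X_eq hkl]
        simp only [List.map_cons, List.map_nil, List.prod_cons, List.prod_nil]
        ring
      rw [Submodule.mem_comap, LinearMap.comp_apply, reorder, cls_X_mul_star]
      exact add_mem (op_mem_wordSpan (ih (hg i) j l) j k) (op_mem_wordSpan (ih (hg j) i l) i k)

/-- The exponent `(1, 1, 1, 1)` of the monomial `x₁x₂x₃x₄`. -/
def oneExp : Fin 4 →₀ ℕ := Finsupp.equivFunOnFinite.symm 1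

theorem oneExp_apply (i : Fin 4) : oneExp i = 1 := rfl

theorem monomial_oneExp : (monomial oneExp 1 : P4) = X 0 * X 1 * X 2 * X 3 := by
  rw [monomial_eq, C_1, one_mul, Finsupp.prod_fintype _ _ fun i => pow_zero _, Fin.prod_univ_four]
  simp only [oneExp_apply, pow_one]

theorem coeff_kameko (u : Fin 4 →₀ ℕ) (f : P4) :
    coeff u (kameko f) = coeff (oneExp + 2 • u) f := by
  classical
  suffices lcoeff kk u ∘ₗ kameko = lcoeff kk (oneExp + 2 • u) from LinearMap.congr_fun this f
  refine (basisMonomials (Fin 4) kk).ext fun d => ?_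
  have odd_iff : (∀ i, d i % 2 = 1) ∧ halfExp d = u ↔ d = oneExp + 2 • u := by
    simp only [Finsupp.ext_iff, halfExp, Finsupp.mapRange_apply, Finsupp.add_apply, oneExp_apply,
      Finsupp.smul_apply, smul_eq_mul, ← forall_and]
    exact forall_congr' fun i => by omega
  rw [LinearMap.comp_apply, kameko, Module.Basis.constr_basis, coe_basisMonomials, lcoeff_apply,
    lcoeff_apply, coeff_monomial, ← if_congr odd_iff rfl rfl]
  split_ifs with hodd h h
  · rw [coeff_monomial, if_pos h.2]
  · rw [coeff_monomial, if_neg fun heq => h ⟨hodd, heq⟩]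
  · exact absurd h.1 hodd
  · exact coeff_zero u

theorem odd_oneExp_add_two_nsmul (u : Fin 4 →₀ ℕ) (i : Fin 4) : Odd ((oneExp + 2 • u) i) := by
  rw [Finsupp.add_apply, oneExp_apply, Finsupp.smul_apply, smul_eq_mul, add_comm]
  exact odd_two_mul_add_one (u i)

theorem kameko_sq (f : P4) : kameko (f ^ 2) = 0 := by
  ext u
  rw [coeff_kameko, coeff_sq_of_odd (odd_oneExp_add_two_nsmul u 0), coeff_zero]

theorem kameko_X_mul_X_mul_sq (i j : Fin 4) (f : P4) : kameko (X i * X j * f ^ 2) = 0 := by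
  ext u
  obtain ⟨k, hki, hkj⟩ : ∃ k, k ≠ i ∧ k ≠ j := by revert i j; decide
  rw [coeff_kameko, coeff_zero, mul_assoc, coeff_X_mul']
  split_ifs
  · refine coeff_X_mul_sq_of_odd hkj ?_ f
    rw [Finsupp.tsub_apply, Finsupp.single_eq_of_ne hki, tsub_zero]
    exact odd_oneExp_add_two_nsmul u k
  · rfl

theorem kameko_X_mul_X_mul_X_mul_X_mul_sq (f : P4) :
    kameko (X 0 * X 1 * X 2 * X 3 * f ^ 2) = f := by
  ext u
  rw [coeff_kameko, ← monomial_oneExp, coeff_monomial_mul, one_mul, coeff_two_nsmul_sq]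

theorem kameko_mem_homog {m : ℕ} {f : P4} (hf : f ∈ homog (2 * m + 4)) :
    kameko f ∈ homog m := by
  refine (mem_homogeneousSubmodule m _).2 fun u hu => ?_
  rw [coeff_kameko] at hu
  have hdeg : (oneExp + 2 • u).degree = 2 * m + 4 :=
    by_contra fun hne => hu (IsHomogeneous.coeff_eq_zero hf hne)
  have hone : oneExp.degree = 4 := by
    simp only [Finsupp.degree_eq_sum, oneExp_apply, Finset.sum_const, Finset.card_univ,
      Fintype.card_fin, smul_eq_mul, mul_one]
  rw [map_add, map_nsmul, hone, smul_eq_mul] at hdeg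
  change Finsupp.weight (fun _ => 1) u = m
  rw [← Finsupp.degree_eq_weight_one]
  omega

/-- The class of the up Kameko map `g ↦ x₁x₂x₃x₄g²`, a section of `kameko`. -/
def upKameko : P4 →ₗ[kk] Cohits (Fin 4) := cls ∘ₗ mulSq (X 0 * X 1 * X 2 * X 3)

theorem upKameko_apply (g : P4) : upKameko g = cls (X 0 * X 1 * X 2 * X 3 * g ^ 2) := rfl

theorem cls_sub_upKameko_mem_wordSpan {s n : ℕ} (hn : n + 2 = 3 * 2 ^ s) {f : P4}
    (hf : f ∈ homog (2 * n + 2)) : cls f - upKameko (kameko f) ∈ wordSpan (s + 1) := by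
  suffices homog (2 * n + 2) ≤ (wordSpan (s + 1)).comap (cls - upKameko ∘ₗ kameko) from this hf
  refine homog_two_mul_add_two_le (fun i g => ?_) (fun i j g hg _ => ?_) fun g _ => ?_ <;>
    rw [Submodule.mem_comap, LinearMap.sub_apply, LinearMap.comp_apply]
  · rw [kameko_sq, cls_eq_zero_iff.2 (X_mul_sq_mem_hit i g), map_zero, sub_zero]
    exact Submodule.zero_mem _
  · rw [kameko_X_mul_X_mul_sq, map_zero, sub_zero]
    exact op_cls_mem_wordSpan hn hg i j
  · rw [kameko_X_mul_X_mul_X_mul_X_mul_sq, upKameko_apply, sub_self]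
    exact Submodule.zero_mem _

theorem upKameko_steenrodSq_succ (t : ℕ) (h : P4) :
    upKameko (steenrodSq (t + 1) h) =
      op 2 3 (cls (X 0 * X 1 * steenrodSq t h))
        + op 1 3 (cls (X 0 * X 2 * steenrodSq t h))
        + op 1 2 (cls (X 0 * X 3 * steenrodSq t h))
        + op 0 3 (cls (X 1 * X 2 * steenrodSq t h))
        + op 0 2 (cls (X 1 * X 3 * steenrodSq t h))
        + op 0 1 (cls (X 2 * X 3 * steenrodSq t h)) := by
  obtain ⟨g, hg⟩ := steenrodSq_X_mul_X_mul_X_mul_X_mul_sq (0 : Fin 4) 1 2 3 t h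
  have h0 := congrArg cls hg
  rw [cls_steenrodSq_succ] at h0
  simp only [map_add, cls_eq_zero_iff.2 (X_mul_sq_mem_hit 0 g), ← op_cls, add_zero,
    ← upKameko_apply, add_assoc] at h0
  rw [← sub_eq_zero, ZModModule.sub_eq_add, h0]
  simp only [add_assoc]

theorem upKameko_mem_wordSpan {s m : ℕ} (hm : m + 3 = 3 * 2 ^ s) {g : P4} (hg : g ∈ hitSub m) :
    upKameko g ∈ wordSpan (s + 1) := by
  suffices hitSub m ≤ (wordSpan (s + 1)).comap upKameko from this hg
  refine Submodule.span_le.2 ?_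
  rintro _ ⟨d, hd, h, hh, rfl⟩
  obtain ⟨t, rfl⟩ := Nat.exists_eq_add_of_lt hd
  have mem (i j k l : Fin 4) : op i j (cls (X k * X l * steenrodSq t h)) ∈ wordSpan (s + 1) := by
    refine op_cls_mem_wordSpan (n := d + t + 1 + 1) (by omega) ?_ i j
    have := ((isHomogeneous_X kk k).mul (isHomogeneous_X kk l)).mul (isHomogeneous_steenrodSq hh t)
    rwa [show 1 + 1 + (d + t) = d + t + 1 + 1 by ring] at this
  rw [SetLike.mem_coe, Submodule.mem_comap, add_assoc, homogeneousComponent_sqTotal hh,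
    upKameko_steenrodSq_succ]
  exact add_mem (add_mem (add_mem (add_mem (add_mem (mem _ _ _ _) (mem _ _ _ _)) (mem _ _ _ _))
    (mem _ _ _ _)) (mem _ _ _ _)) (mem _ _ _ _)

theorem cls_mem_wordSpan {s m : ℕ} (hm : m + 3 = 3 * 2 ^ s) {f : P4}
    (hf : f ∈ homog (2 * m + 4)) (hker : kameko f ∈ hitSub m) : cls f ∈ wordSpan (s + 1) := by
  rw [← sub_add_cancel (cls f) (upKameko (kameko f))]
  exact add_mem (cls_sub_upKameko_mem_wordSpan (n := m + 1) (by omega) hf)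
    (upKameko_mem_wordSpan hm hker)

end KamekoKernel

/-! ### Invariant classes -/

section Invariance

theorem exists_isUnit_mul_eq_mul {m n R : Type*} [Fintype m] [DecidableEq m] [Fintype n]
    [DecidableEq n] [CommRing R] {A : Matrix m n R} {B : Matrix n m R} (h : B * A = 1)
    {g : Matrix n n R} (hg : IsUnit g) :
    ∃ M : Matrix m m R, IsUnit M ∧ M * A = A * g := by
  refine ⟨1 + A * ((g - 1) * B), ?_, ?_⟩
  · rw [Matrix.isUnit_iff_isUnit_det, Matrix.det_one_add_mul_comm, Matrix.mul_assoc, h,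
      Matrix.mul_one, add_sub_cancel, ← Matrix.isUnit_iff_isUnit_det]
    exact hg
  · rw [Matrix.add_mul, Matrix.one_mul, Matrix.mul_assoc, Matrix.mul_assoc, h, Matrix.mul_one,
      Matrix.mul_sub, Matrix.mul_one, add_sub_cancel]

variable {σ : Type*}

theorem exists_mul_eq_one_of_minor_ne_zero [Fintype σ]
    {A : Matrix σ (Fin 2) kk} {i j : σ} (h : minor A i j ≠ 0) :
    ∃ B : Matrix (Fin 2) σ kk, B * A = 1 := by
  classical
  have hdet : (A.submatrix ![i, j] id).det = minor A i j := by
    rw [Matrix.det_fin_two, CharTwo.sub_eq_add]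
    rfl
  refine ⟨(A.submatrix ![i, j] id)⁻¹ * (1 : Matrix σ σ kk).submatrix ![i, j] (Equiv.refl σ), ?_⟩
  rw [Matrix.mul_assoc, Matrix.one_submatrix_mul]
  exact Matrix.nonsing_inv_mul _ (hdet ▸ h.isUnit)

theorem minor_mul (A : Matrix σ (Fin 2) kk) (g : Matrix (Fin 2) (Fin 2) kk) (i j : σ) :
    minor (A * g) i j = minor A i j * minor g 0 1 := by
  simp only [minor, Matrix.mul_apply, Fin.sum_univ_two]
  linear_combination (A i 0 * A j 0 * g 0 0 * g 0 1 + A i 1 * A j 1 * g 1 0 * g 1 1)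
    * CharTwo.two_eq_zero (R := kk)

theorem edgeMinor_mul (A : Matrix σ (Fin 2) kk) {g : Matrix (Fin 2) (Fin 2) kk}
    (hg : minor g 0 1 = 1) : edgeMinor (A * g) = edgeMinor A := by
  funext a
  induction a with | h i j
  change minor (A * g) i j = minor A i j
  rw [minor_mul, hg, mul_one]

theorem spikeFunctional_add_add_eq_zero {A B C : Matrix (Fin 4) (Fin 2) kk}
    (hB : edgeMinor B = edgeMinor A) (hC : edgeMinor C = edgeMinor A)
    (hsum : ∀ k, A k 0 + B k 0 + C k 0 = 0) {s : ℕ} {y : Cohits (Fin 4)} (hy : y ∈ wordSpan s) :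
    spikeFunctional A s y + spikeFunctional B s y + spikeFunctional C s y = 0 := by
  suffices wordSpan s ≤ LinearMap.ker
    (spikeFunctional A s + spikeFunctional B s + spikeFunctional C s) from this hy
  refine Submodule.span_le.2 ?_
  rintro _ ⟨m, k, rfl, rfl⟩
  rw [SetLike.mem_coe, LinearMap.mem_ker, LinearMap.add_apply, LinearMap.add_apply,
    spikeFunctional_word, spikeFunctional_word, spikeFunctional_word, hB, hC, ← mul_add, ← mul_add,
    hsum, mul_zero]

theorem spikeFunctional_eq_zero_of_minor_eq_zero {A : Matrix (Fin 4) (Fin 2) kk}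
    (hA : ∀ i j, minor A i j = 0) {s : ℕ} {y : Cohits (Fin 4)} (hy : y ∈ wordSpan (s + 1)) :
    spikeFunctional A (s + 1) y = 0 := by
  suffices wordSpan (s + 1) ≤ LinearMap.ker (spikeFunctional A (s + 1)) from this hy
  refine Submodule.span_le.2 ?_
  rintro _ ⟨m, k, hm, rfl⟩
  obtain ⟨a, ha⟩ := Multiset.card_pos_iff_exists_mem.1 (show 0 < m.card by omega)
  obtain ⟨m, rfl⟩ := Multiset.exists_cons_of_mem ha
  rw [Multiset.card_cons, Nat.add_right_cancel_iff] at hm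
  subst hm
  induction a with | h i j
  rw [SetLike.mem_coe, LinearMap.mem_ker, word_cons, edgeOp_mk, spikeFunctional_op, hA, zero_mul]

theorem spikeFunctional_cls_linSubst [Fintype σ] (A : Matrix σ (Fin 2) kk) (M : Matrix σ σ kk)
    (s : ℕ) (f : MvPolynomial σ kk) :
    spikeFunctional A s (cls (linSubst M f)) = spikeFunctional (M * A) s (cls f) := by
  rw [spikeFunctional_cls, spikeFunctional_cls, linSubst_linSubst]

theorem cls_eq_zero_of_invariant {s : ℕ} {f : P4}
    (hf : ∀ M : Matrix (Fin 4) (Fin 4) kk, IsUnit M → cls (linSubst M f) = cls f)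
    (hw : cls f ∈ wordSpan (s + 1)) : cls f = 0 := by
  have wordSpan_le : wordSpan (s + 1) ≤ normalSpan (s + 1) := by
    refine Submodule.span_le.2 ?_
    rintro _ ⟨m, k, hm, rfl⟩
    exact hm ▸ word_mem_normalSpan (Multiset.card_pos.1 (hm ▸ s.succ_pos)) k
  refine eq_zero_of_mem_normalSpan (wordSpan_le hw) fun A => ?_
  by_cases hA : ∀ i j, minor A i j = 0
  · exact spikeFunctional_eq_zero_of_minor_eq_zero hA hw
  push Not at hA
  obtain ⟨i, j, hij⟩ := hA
  obtain ⟨B, hB⟩ := exists_mul_eq_one_of_minor_ne_zero hij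
  have invariant {g : Matrix (Fin 2) (Fin 2) kk} (hg : IsUnit g) :
      spikeFunctional (A * g) (s + 1) (cls f) = spikeFunctional A (s + 1) (cls f) := by
    obtain ⟨M, hM, hMA⟩ := exists_isUnit_mul_eq_mul hB hg
    rw [← hMA, ← spikeFunctional_cls_linSubst, hf M hM]
  set swap : Matrix (Fin 2) (Fin 2) kk := !![0, 1; 1, 0]
  set shear : Matrix (Fin 2) (Fin 2) kk := !![1, 0; 1, 1]
  have columns (k : Fin 4) : A k 0 + (A * swap) k 0 + (A * shear) k 0 = 0 := by
    simp only [Matrix.mul_apply, Fin.sum_univ_two, swap, shear, Matrix.of_apply,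
      Matrix.cons_val_zero, Matrix.cons_val_one, mul_zero, mul_one, zero_add]
    exact CharTwo.add_self_eq_zero _
  have sum_zero := spikeFunctional_add_add_eq_zero
    (edgeMinor_mul A (g := swap) (by decide)) (edgeMinor_mul A (g := shear) (by decide)) columns hw
  rwa [invariant ((Matrix.isUnit_iff_isUnit_det swap).2 (by decide)),
    invariant ((Matrix.isUnit_iff_isUnit_det shear).2 (by decide)), CharTwo.add_self_eq_zero,
    zero_add] at sum_zero

end Invariance

theorem cls_eq_cls_of_Qmk_eq {n : ℕ} {f g : P4} (hf : f ∈ homog n) (hg : g ∈ homog n)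
    (h : Qmk n f = Qmk n g) : cls f = cls g := by
  rw [← sub_eq_zero, ← map_sub, cls_eq_zero_iff]
  refine hitSub_le_hit n ((Qmk_eq_zero_iff (Submodule.sub_mem _ hf hg)).1 ?_)
  rw [map_sub, h, sub_self]

theorem cls_linSubst_eq_of_mem_invPre {n : ℕ} {f : P4} (hf : f ∈ invPre n glSet)
    (M : Matrix (Fin 4) (Fin 4) kk) (hM : IsUnit M) : cls (linSubst M f) = cls f := by
  rw [← sub_eq_zero, ← map_sub, cls_eq_zero_iff]
  exact hitSub_le_hit n ((Submodule.mem_iInf _).1 ((Submodule.mem_iInf _).1 hf.2 M) hM)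

/-- For `s ≥ 1` and `n = 2(2^s-1) + 2^s = 3·2^s - 2 = 2m + 4` (so `m = 3·2^{s-1} - 3`
and the Kameko map is `Sq^0 : Q_{3·2^s-2} → Q_{3·2^{s-1}-3}`), the subspace of
`GL_4(F_2)`-invariant elements of the kernel of the Kameko surjection is trivial. -/
theorem statement_3 (s m : ℕ) (hs : 1 ≤ s) (hm : 2 * m + 4 = 2 * (2 ^ s - 1) + 2 ^ s) :
    kamekoKer m ⊓ QInv (2 * m + 4) glSet = ⊥ := by
  obtain ⟨r, rfl⟩ := Nat.exists_eq_add_of_le' hs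
  have degree_eq : m + 3 = 3 * 2 ^ r := by
    have := Nat.two_pow_pos r
    rw [pow_succ] at hm
    omega
  refine (Submodule.eq_bot_iff _).2 ?_
  rintro _ ⟨⟨f, ⟨hf, hker⟩, rfl⟩, g, hg, hgf⟩
  have cls_eq : cls g = cls f := cls_eq_cls_of_Qmk_eq hg.1 hf hgf
  have mem_words : cls g ∈ wordSpan (r + 1) :=
    cls_eq ▸ cls_mem_wordSpan degree_eq hf ((Qmk_eq_zero_iff (kameko_mem_homog hf)).1 hker)
  have cls_eq_zero : cls g = 0 :=
    cls_eq_zero_of_invariant (cls_linSubst_eq_of_mem_invPre hg) mem_words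
  rw [Qmk_eq_zero_iff hf]
  exact mem_hitSub_of_mem_hit (cls_eq_zero_iff.1 (cls_eq ▸ cls_eq_zero)) hf

end
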